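/- Let (X, σ_X) and (Y, σ_Y) be one-sided subshifts with Y a factor of X via a one-block factor map π, let a = (a_1, a_2) with a_1 > 0 and a_2 ≥ 0, and let Φ ∈ C_sa(X, σ_X) be generated by a sub-multiplicative φ : L(X) → [0,∞); define φ^{(2)}(J) = ( Σ_{I ∈ L_n(X), πI = J} φ(I)^{1/a_1} )^{a_1} for J ∈ L_n(Y) and let Φ^{(2)} be generated by φ^{(2)}. Then: (ii) I(Φ, a) is a non-empty compact convex set and each of its extreme points is ergodic; (iii) I(Φ, a) is a singleton if and only if I( (1/(a_1+a_2)) Φ^{(2)} ) is a singleton {ν} and I_ν( (1/a_1) Φ ) contains a unique ergodic measure. -/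

import Mathlib

open MeasureTheory Filter Topology
open scoped Classical ENNReal NNReal

noncomputable section

/-- The left shift on one-sided sequences. -/
def shiftMap {A : Type} : (ℕ → A) → (ℕ → A) := fun x n => x (n + 1)

/-- The cylinder set of a finite word. -/
def cyl {A : Type} (I : List A) : Set (ℕ → A) :=
  {x | ∀ i : Fin I.length, x i = I.get i}

/-- Membership of a word in the language of `X`. -/
def Lang {A : Type} (X : Set (ℕ → A)) (I : List A) : Prop :=
  (cyl I ∩ X).Nonempty

/-- `X` is a (nonempty) one-sided subshift. -/
def IsSubshift {A : Type} [TopologicalSpace A] (X : Set (ℕ → A)) : Prop :=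
  X.Nonempty ∧ IsCompact X ∧ shiftMap '' X ⊆ X

/-- weak `p`-specification -/
def WeakSpecification {A : Type} (X : Set (ℕ → A)) (p : ℕ) : Prop :=
  ∀ I J : List A, Lang X I → Lang X J →
    ∃ K : List A, K.length ≤ p ∧ Lang X (I ++ K ++ J)

/-- `p`-specification -/
def Specification {A : Type} (X : Set (ℕ → A)) (p : ℕ) : Prop :=
  ∀ I J : List A, Lang X I → Lang X J →
    ∃ K : List A, K.length = p ∧ Lang X (I ++ K ++ J)

/-- invariant probability measures supported on `X` (predicate on plain measures) -/
def InvOn {A : Type} [MeasurableSpace A] (X : Set (ℕ → A)) (μ : Measure (ℕ → A)) : Prop :=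
  IsProbabilityMeasure μ ∧ μ.map shiftMap = μ ∧ μ X = 1

/-- the set of shift-invariant probability measures on `X` -/
def MInv {A : Type} [MeasurableSpace A] (X : Set (ℕ → A)) :
    Set (ProbabilityMeasure (ℕ → A)) :=
  {μ | (μ : Measure (ℕ → A)).map shiftMap = (μ : Measure (ℕ → A)) ∧
    (μ : Measure (ℕ → A)) X = 1}

/-- measure of a word: `μ([I] ∩ X)` -/
def mw {A : Type} [MeasurableSpace A] (X : Set (ℕ → A)) (μ : Measure (ℕ → A))
    (I : List A) : ℝ :=
  (μ (cyl I ∩ X)).toReal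

/-- the initial word of length `n` of a sequence -/
def wordOf {A : Type} (x : ℕ → A) (n : ℕ) : List A := List.ofFn (fun i : Fin n => x i)

/-- `n`-block entropy -/
def Hblock {A : Type} [Fintype A] [MeasurableSpace A] (X : Set (ℕ → A))
    (μ : Measure (ℕ → A)) (n : ℕ) : ℝ :=
  -∑ w : Fin n → A, mw X μ (List.ofFn w) * Real.log (mw X μ (List.ofFn w))

/-- measure-theoretic entropy (the limit exists for invariant measures; `liminf` realizes it) -/
def ent {A : Type} [Fintype A] [MeasurableSpace A] (X : Set (ℕ → A))
    (μ : Measure (ℕ → A)) : ℝ :=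
  liminf (fun n : ℕ => Hblock X μ n / n) atTop

/-- extended logarithm: `log t`, with value `⊥` for `t ≤ 0` -/
def elog (t : ℝ) : EReal := if t ≤ 0 then ⊥ else ((Real.log t : ℝ) : EReal)

/-- the integral `∫ log g dμ`, valued in `ℝ ∪ {−∞}` -/
def intlog {Ω : Type*} [MeasurableSpace Ω] (μ : Measure Ω) (g : Ω → ℝ) : EReal :=
  ((∫⁻ x, ENNReal.ofReal (Real.log (g x)) ∂μ : ℝ≥0∞) : EReal) -
    ((∫⁻ x, (if g x ≤ 0 then (⊤ : ℝ≥0∞) else ENNReal.ofReal (-Real.log (g x))) ∂μ : ℝ≥0∞) : EReal)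

/-- sub-additive potential `Φ = (log φ_n)_{n ≥ 1}` -/
def SubaddPot {A : Type} [TopologicalSpace A] (X : Set (ℕ → A))
    (φ : ℕ → (ℕ → A) → ℝ) : Prop :=
  (∀ n, 1 ≤ n → ContinuousOn (φ n) X) ∧
  (∀ n, 1 ≤ n → ∀ x ∈ X, 0 ≤ φ n x) ∧
  ∃ c > (0:ℝ), ∀ n m : ℕ, 1 ≤ n → 1 ≤ m → ∀ x ∈ X,
    φ (n + m) x ≤ c * φ n x * φ m (shiftMap^[n] x)

/-- `Φ_*(μ) = lim (1/n) ∫ log φ_n dμ` (realized as a `liminf` in `EReal`) -/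
def PhiStar {A : Type} [MeasurableSpace A] (μ : Measure (ℕ → A))
    (φ : ℕ → (ℕ → A) → ℝ) : EReal :=
  liminf (fun n : ℕ => (((n : ℝ)⁻¹ : ℝ) : EReal) * intlog μ (φ n)) atTop

/-- sub-multiplicative function on the language of `X` -/
def Submult {A : Type} (X : Set (ℕ → A)) (φ : List A → ℝ) : Prop :=
  (∀ I, Lang X I → 0 ≤ φ I) ∧ φ [] = 1 ∧
  ∃ c > (0:ℝ), ∀ I J : List A, Lang X (I ++ J) → φ (I ++ J) ≤ c⁻¹ * φ I * φ J

/-- the potential generated by a word function -/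
def genPot {A : Type} (φ : List A → ℝ) : ℕ → (ℕ → A) → ℝ := fun n x => φ (wordOf x n)

/-- the scaled potential `cΦ = (log φ_n^c)` -/
def scPot {Ω : Type*} (c : ℝ) (φ : ℕ → Ω → ℝ) : ℕ → Ω → ℝ := fun n x => φ n x ^ c

/-- the "pressure value" `Φ_*(μ) + h_μ` -/
def eqVal {A : Type} [Fintype A] [MeasurableSpace A] (X : Set (ℕ → A))
    (φ : ℕ → (ℕ → A) → ℝ) (μ : ProbabilityMeasure (ℕ → A)) : EReal :=
  PhiStar (μ : Measure (ℕ → A)) φ + ((ent X (μ : Measure (ℕ → A)) : ℝ) : EReal)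

/-- the set of equilibrium states of `Φ` -/
def EqSet {A : Type} [Fintype A] [MeasurableSpace A] (X : Set (ℕ → A))
    (φ : ℕ → (ℕ → A) → ℝ) : Set (ProbabilityMeasure (ℕ → A)) :=
  {μ | μ ∈ MInv X ∧ eqVal X φ μ = ⨆ η ∈ MInv X, eqVal X φ η}

/-- sequence map induced by a one-block map -/
def blockMap {A B : Type} (π : A → B) : (ℕ → A) → (ℕ → B) := fun x n => π (x n)

/-- pushforward of a probability measure under a one-block map -/
def pushM {A B : Type} [MeasurableSpace A] [MeasurableSpace B] (π : A → B)
    (μ : ProbabilityMeasure (ℕ → A)) : Measure (ℕ → B) :=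
  (μ : Measure (ℕ → A)).map (blockMap π)

/-- conditional equilibrium states of `Φ` over `ν` -/
def CondEqSet {A B : Type} [Fintype A] [MeasurableSpace A] [MeasurableSpace B]
    (X : Set (ℕ → A)) (π : A → B) (φ : ℕ → (ℕ → A) → ℝ) (ν : Measure (ℕ → B)) :
    Set (ProbabilityMeasure (ℕ → A)) :=
  {μ | μ ∈ MInv X ∧ pushM π μ = ν ∧
    eqVal X φ μ = ⨆ η ∈ {η | η ∈ MInv X ∧ pushM π η = ν}, eqVal X φ η}

/-- the projected word function `ψ(J) = Σ_{I : πI = J} φ(I)` -/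
def psiProj {A B : Type} [Fintype A] (X : Set (ℕ → A)) (π : A → B) (φ : List A → ℝ)
    (J : List B) : ℝ :=
  ∑ w : Fin J.length → A,
    if Lang X (List.ofFn w) ∧ List.map π (List.ofFn w) = J then φ (List.ofFn w) else 0

/-- `φ^{(2)}(J) = (Σ_{I : πI = J} φ(I)^{1/a₁})^{a₁}` -/
def phiTwo {A B : Type} [Fintype A] (X : Set (ℕ → A)) (π : A → B) (φ : List A → ℝ)
    (a₁ : ℝ) (J : List B) : ℝ :=
  (∑ w : Fin J.length → A,
    if Lang X (List.ofFn w) ∧ List.map π (List.ofFn w) = J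
    then φ (List.ofFn w) ^ a₁⁻¹ else 0) ^ a₁

/-- `a`-weighted pressure value for `k = 2` -/
def wVal2 {A B : Type} [Fintype A] [Fintype B] [MeasurableSpace A] [MeasurableSpace B]
    (X : Set (ℕ → A)) (Y : Set (ℕ → B)) (π : A → B) (φ : ℕ → (ℕ → A) → ℝ)
    (a₁ a₂ : ℝ) (μ : ProbabilityMeasure (ℕ → A)) : EReal :=
  PhiStar (μ : Measure (ℕ → A)) φ +
    ((a₁ * ent X (μ : Measure (ℕ → A)) + a₂ * ent Y (pushM π μ) : ℝ) : EReal)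

/-- the set of `a`-weighted equilibrium states, `k = 2` -/
def WEqSet2 {A B : Type} [Fintype A] [Fintype B] [MeasurableSpace A] [MeasurableSpace B]
    (X : Set (ℕ → A)) (Y : Set (ℕ → B)) (π : A → B) (φ : ℕ → (ℕ → A) → ℝ)
    (a₁ a₂ : ℝ) : Set (ProbabilityMeasure (ℕ → A)) :=
  {μ | μ ∈ MInv X ∧ wVal2 X Y π φ a₁ a₂ μ = ⨆ η ∈ MInv X, wVal2 X Y π φ a₁ a₂ η}

/-- convexity of a set of probability measures -/
def ConvexPM {Ω : Type*} [MeasurableSpace Ω] (S : Set (ProbabilityMeasure Ω)) : Prop :=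
  ∀ μ₁ ∈ S, ∀ μ₂ ∈ S, ∀ t : ℝ, 0 ≤ t → t ≤ 1 → ∀ μ : ProbabilityMeasure Ω,
    (μ : Measure Ω) = ENNReal.ofReal t • (μ₁ : Measure Ω) +
      ENNReal.ofReal (1 - t) • (μ₂ : Measure Ω) → μ ∈ S

/-- extreme points of a set of probability measures -/
def IsExtremePM {Ω : Type*} [MeasurableSpace Ω] (S : Set (ProbabilityMeasure Ω))
    (μ : ProbabilityMeasure Ω) : Prop :=
  μ ∈ S ∧ ∀ μ₁ ∈ S, ∀ μ₂ ∈ S, ∀ t : ℝ, 0 < t → t < 1 →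
    (μ : Measure Ω) = ENNReal.ofReal t • (μ₁ : Measure Ω) +
      ENNReal.ofReal (1 - t) • (μ₂ : Measure Ω) → μ₁ = μ₂

/-- the class `Ω_w(A*, p)` -/
def OmegaW {A : Type} [Fintype A] (p : ℕ) (f : List A → ℝ) : Prop :=
  (∀ I, 0 ≤ f I ∧ f I ≤ 1) ∧
  ∃ c > (0:ℝ),
    (∀ n : ℕ, ∑ w : Fin n → A, f (List.ofFn w) = 1) ∧
    (∀ I J : List A, ∃ K : List A, K.length ≤ p ∧ c * (f I * f J) ≤ f (I ++ K ++ J)) ∧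
    (∀ I : List A, ∃ i j : A, c * f I ≤ f (i :: I) ∧ c * f I ≤ f (I ++ [j]))

/-- the class `Ω(A*, p)` -/
def OmegaS {A : Type} [Fintype A] (p : ℕ) (f : List A → ℝ) : Prop :=
  (∀ I, 0 ≤ f I ∧ f I ≤ 1) ∧
  ∃ c > (0:ℝ),
    (∀ n : ℕ, ∑ w : Fin n → A, f (List.ofFn w) = 1) ∧
    (∀ I J : List A, ∃ K : List A, K.length = p ∧ c * (f I * f J) ≤ f (I ++ K ++ J))

/-- `f_{m,n}(I)` -/
def fmn {A : Type} [Fintype A] (f : List A → ℝ) (m n : ℕ) (I : List A) : ℝ :=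
  ∑ u : Fin m → A, ∑ v : Fin n → A, f (List.ofFn u ++ I ++ List.ofFn v)

/-- `f*(I) = sup_{m,n} f_{m,n}(I)` -/
def fstar {A : Type} [Fintype A] (f : List A → ℝ) (I : List A) : ℝ :=
  ⨆ m : ℕ, ⨆ n : ℕ, fmn f m n I

/-- the class `D_w(X, p)` -/
def Dw {A : Type} (X : Set (ℕ → A)) (p : ℕ) (φ : List A → ℝ) : Prop :=
  (∀ I, Lang X I → 0 ≤ φ I) ∧ (∃ I, Lang X I ∧ I ≠ [] ∧ 0 < φ I) ∧
  ∃ c : ℝ, 0 < c ∧ c ≤ 1 ∧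
    (∀ I J : List A, Lang X (I ++ J) → φ (I ++ J) ≤ c⁻¹ * φ I * φ J) ∧
    (∀ I J : List A, Lang X I → Lang X J →
      ∃ K : List A, K.length ≤ p ∧ Lang X (I ++ K ++ J) ∧
        c * (φ I * φ J) ≤ φ (I ++ K ++ J))

/-- the class `D(X, p)` -/
def Ds {A : Type} (X : Set (ℕ → A)) (p : ℕ) (φ : List A → ℝ) : Prop :=
  (∀ I, Lang X I → 0 ≤ φ I) ∧ (∃ I, Lang X I ∧ I ≠ [] ∧ 0 < φ I) ∧
  ∃ c : ℝ, 0 < c ∧ c ≤ 1 ∧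
    (∀ I J : List A, Lang X (I ++ J) → φ (I ++ J) ≤ c⁻¹ * φ I * φ J) ∧
    (∀ I J : List A, Lang X I → Lang X J →
      ∃ K : List A, K.length = p ∧ Lang X (I ++ K ++ J) ∧
        c * (φ I * φ J) ≤ φ (I ++ K ++ J))

end

noncomputable section

/-- iterated one-block maps along a chain of alphabets: `tauFrom π j i : B j → B (j+i)` -/
def tauFrom {B : ℕ → Type} (π : ∀ i, B i → B (i+1)) (j : ℕ) : (i : ℕ) → B j → B (j + i)
  | 0 => id
  | (i+1) => fun a => π (j + i) (tauFrom π j i a)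

/-- weighted pressure value along a chain starting at index `j`, with `k` weights `w 0, …, w (k-1)` -/
def wValGen {B : ℕ → Type} [∀ i, Fintype (B i)] [∀ i, MeasurableSpace (B i)]
    (π : ∀ i, B i → B (i+1)) (X : ∀ i, Set (ℕ → B i)) (j k : ℕ) (w : ℕ → ℝ)
    (φ : ℕ → (ℕ → B j) → ℝ) (μ : ProbabilityMeasure (ℕ → B j)) : EReal :=
  PhiStar (μ : Measure (ℕ → B j)) φ +
    ((∑ i ∈ Finset.range k, w i *
      ent (X (j + i)) ((μ : Measure (ℕ → B j)).map (blockMap (tauFrom π j i))) : ℝ) : EReal)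

/-- weighted equilibrium states along a chain -/
def wEqSetGen {B : ℕ → Type} [∀ i, Fintype (B i)] [∀ i, MeasurableSpace (B i)]
    (π : ∀ i, B i → B (i+1)) (X : ∀ i, Set (ℕ → B i)) (j k : ℕ) (w : ℕ → ℝ)
    (φ : ℕ → (ℕ → B j) → ℝ) : Set (ProbabilityMeasure (ℕ → B j)) :=
  {μ | μ ∈ MInv (X j) ∧
    wValGen π X j k w φ μ = ⨆ η ∈ MInv (X j), wValGen π X j k w φ η}

end

open MeasureTheory Filter Topology
open scoped Classical ENNReal NNReal

namespace WES
open Finset (range)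

lemma gibbs_pt (p x y : ℝ) (hp : 0 ≤ p) (hx : p ≤ x) (hy : p ≤ y) :
    Real.negMulLog p ≤ -(p * Real.log x) - p * Real.log y + x * y - p := by
  rcases hp.eq_or_lt with h | h
  · subst h; simp; positivity
  · have hx0 : 0 < x := by linarith
    have hy0 : 0 < y := by linarith
    have h1 := Real.log_le_sub_one_of_pos (show 0 < x * y / p by positivity)
    rw [Real.log_div (by positivity) h.ne', Real.log_mul hx0.ne' hy0.ne'] at h1
    have h2 := mul_le_mul_of_nonneg_left h1 h.le
    have h3 : p * (x * y / p - 1) = x * y - p := by field_simp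
    rw [h3] at h2
    unfold Real.negMulLog
    linarith

lemma gibbs_prod {α β : Type*} [Fintype α] [Fintype β] (P : α → β → ℝ) (hP : ∀ a b, 0 ≤ P a b)
    (h1 : ∑ a, ∑ b, P a b = 1) :
    ∑ a, ∑ b, Real.negMulLog (P a b) ≤
      ∑ a, Real.negMulLog (∑ b, P a b) + ∑ b, Real.negMulLog (∑ a, P a b) := by
  have key : ∀ a b, Real.negMulLog (P a b) ≤ -(P a b * Real.log (∑ b, P a b))
      - P a b * Real.log (∑ a, P a b) + (∑ b, P a b) * (∑ a, P a b) - P a b := fun a b =>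
    gibbs_pt _ _ _ (hP a b)
      (Finset.single_le_sum (f := fun b => P a b) (fun b _ => hP a b) (Finset.mem_univ b))
      (Finset.single_le_sum (f := fun a => P a b) (fun a _ => hP a b) (Finset.mem_univ a))
  refine (Finset.sum_le_sum fun a _ => Finset.sum_le_sum fun b _ => key a b).trans ?_
  have h2 : ∑ b, ∑ a, P a b = 1 := by rw [Finset.sum_comm]; exact h1
  have e1 : ∑ a, ∑ b, -(P a b * Real.log (∑ b, P a b)) = ∑ a, Real.negMulLog (∑ b, P a b) := by
    refine Finset.sum_congr rfl fun a _ => ?_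
    rw [Finset.sum_neg_distrib, ← Finset.sum_mul]; simp [Real.negMulLog]
  have e2 : ∑ a, ∑ b, (P a b * Real.log (∑ a, P a b)) = - ∑ b, Real.negMulLog (∑ a, P a b) := by
    rw [Finset.sum_comm, ← Finset.sum_neg_distrib]
    refine Finset.sum_congr rfl fun a _ => ?_
    rw [← Finset.sum_mul]; simp [Real.negMulLog]
  have e3 : ∑ a, ∑ b, (∑ b, P a b) * (∑ a, P a b) = 1 := by
    simp_rw [← Finset.mul_sum, ← Finset.sum_mul]
    rw [h1, h2]; norm_num
  simp only [Finset.sum_add_distrib, Finset.sum_sub_distrib]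
  rw [e1, e2, e3, h1]
  linarith

lemma logsum {α : Type*} (s : Finset α) (p f : α → ℝ) (hp : ∀ a ∈ s, 0 ≤ p a)
    (hf : ∀ a ∈ s, 0 ≤ f a) (h0 : ∀ a ∈ s, f a = 0 → p a = 0) :
    ∑ a ∈ s, (Real.negMulLog (p a) + p a * Real.log (f a)) ≤
      Real.negMulLog (∑ a ∈ s, p a) + (∑ a ∈ s, p a) * Real.log (∑ a ∈ s, f a) := by
  set P := ∑ a ∈ s, p a
  set F := ∑ a ∈ s, f a
  have hP : 0 ≤ P := Finset.sum_nonneg hp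
  have hF : 0 ≤ F := Finset.sum_nonneg hf
  have key : ∀ a ∈ s, Real.negMulLog (p a) + p a * Real.log (f a) ≤
      -(p a * Real.log P) + p a * Real.log F + (f a * (P / F) - p a) := by
    intro a ha
    rcases (hp a ha).eq_or_lt with h | h
    · rw [← h]; simp
      exact mul_nonneg (hf a ha) (div_nonneg hP hF)
    · have hfa : 0 < f a := (hf a ha).lt_of_ne fun e => h.ne' (h0 a ha e.symm)
      have hP0 : 0 < P := h.trans_le (Finset.single_le_sum hp ha)
      have hF0 : 0 < F := hfa.trans_le (Finset.single_le_sum hf ha)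
      have h1 := Real.log_le_sub_one_of_pos (show 0 < f a * P / (p a * F) by positivity)
      rw [Real.log_div (by positivity) (by positivity), Real.log_mul hfa.ne' hP0.ne',
        Real.log_mul h.ne' hF0.ne'] at h1
      have h2 := mul_le_mul_of_nonneg_left h1 h.le
      have h3 : p a * (f a * P / (p a * F) - 1) = f a * (P / F) - p a := by field_simp
      rw [h3] at h2
      unfold Real.negMulLog
      linarith
  refine (Finset.sum_le_sum key).trans ?_
  simp only [Finset.sum_add_distrib, Finset.sum_sub_distrib, Finset.sum_neg_distrib,
    ← Finset.sum_mul]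
  change -(P * Real.log P) + P * Real.log F + (F * (P / F) - P) ≤ _
  have : F * (P / F) - P ≤ 0 := by
    by_cases h : F = 0
    · rw [h]; simp; exact hP
    · rw [mul_div_cancel₀ _ h]; simp
  unfold Real.negMulLog
  linarith

lemma telescoping (a : ℕ → ℕ → ℝ) (n l : ℕ) (hln : l ≤ n) (C K : ℝ) (hC : 0 ≤ C)
    (hsub : ∀ i p q, i + p + q ≤ n → a i (p + q) ≤ a i p + a (i + p) q + C)
    (hK : ∀ i p, p ≤ l → i + p ≤ n → a i p ≤ K) :
    l * a 0 n ≤ ∑ k ∈ range (n - l + 1), a k l + (n + 1) * C + l * (2 * K + C) := by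
  obtain ⟨k, rfl⟩ := Nat.exists_eq_add_of_le hln
  set b : ℕ → ℝ := fun i => a i (l + k - i) with hb
  have h1 : ∑ i ∈ range (k + 1), b i + ∑ i ∈ range l, b (k + 1 + i)
      = ∑ i ∈ range l, b i + ∑ i ∈ range (k + 1), b (l + i) := by
    rw [← Finset.sum_range_add, ← Finset.sum_range_add, add_comm]
  have h2 : ∑ i ∈ range (k + 1), b i ≤
      ∑ i ∈ range (k + 1), a i l + ∑ i ∈ range (k + 1), b (l + i) + (k + 1) * C := by
    have : ∑ i ∈ range (k + 1), b i ≤ ∑ i ∈ range (k + 1), (a i l + b (l + i) + C) := by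
      refine Finset.sum_le_sum fun i hi => ?_
      have hi' : i ≤ k := by simpa [Nat.lt_succ_iff] using hi
      have := hsub i l (k - i) (by omega)
      simp only [hb]
      rw [show l + k - i = l + (k - i) by omega, show l + k - (l + i) = k - i by omega,
        add_comm l i]
      exact this
    refine this.trans (le_of_eq ?_)
    simp [Finset.sum_add_distrib]
  have h3 : ∑ i ∈ range l, b (k + 1 + i) ≤ l * K := by
    calc _ ≤ ∑ i ∈ range l, K := Finset.sum_le_sum fun i hi => by
          have : i < l := by simpa using hi
          exact hK _ _ (by omega) (by omega)
      _ = _ := by simp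
  have h4 : l * (a 0 (l + k) - K - C) ≤ ∑ i ∈ range l, b i := by
    calc _ = ∑ i ∈ range l, (a 0 (l + k) - K - C) := by simp; ring
      _ ≤ _ := Finset.sum_le_sum fun i hi => by
          have hi' : i < l := by simpa using hi
          have h5 := hsub 0 i (l + k - i) (by omega)
          have h6 := hK 0 i (by omega) (by omega)
          rw [show i + (l + k - i) = l + k by omega, zero_add] at h5
          simp only [hb]; linarith
  rw [show l + k - l + 1 = k + 1 by omega]
  push_cast
  nlinarith [mul_nonneg (Nat.cast_nonneg (α := ℝ) l) hC]

lemma fekete (w : ℕ → ℝ) (C : ℝ) (hw : ∀ n m, w (n + m) ≤ w n + w m + C) :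
    ∃ e : EReal, e ≠ ⊤ ∧ Tendsto (fun n : ℕ => ((w n / n : ℝ) : EReal)) atTop (𝓝 e) ∧
      ∀ r : ℝ, (r : EReal) ≤ e ↔ ∀ n : ℕ, n * r ≤ w n + C := by
  have hv : Subadditive (fun n => w n + C) := fun n m => by
    have := hw n m; simp only; linarith
  have hC : Tendsto (fun n : ℕ => C / (n : ℝ)) atTop (𝓝 0) :=
    tendsto_const_div_atTop_nhds_zero_nat C
  have hw0 : 0 ≤ w 0 + C := by have := hw 0 0; simp at this; linarith
  by_cases hb : BddBelow (Set.range fun n : ℕ => (w n + C) / n)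
  · have ht := hv.tendsto_lim hb
    have ht' : Tendsto (fun n : ℕ => w n / n) atTop (𝓝 hv.lim) := by
      have := ht.sub hC
      rw [sub_zero] at this
      refine this.congr fun n => ?_
      ring
    refine ⟨(hv.lim : EReal), EReal.coe_ne_top _, (EReal.tendsto_coe).2 ht', fun r => ?_⟩
    rw [EReal.coe_le_coe_iff]
    constructor
    · intro h n
      rcases Nat.eq_zero_or_pos n with rfl | hn
      · simpa using hw0
      · have := h.trans (hv.lim_le_div hb hn.ne')
        rw [le_div_iff₀ (by positivity)] at this
        linarith
    · intro h
      refine ge_of_tendsto ht ?_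
      filter_upwards [eventually_gt_atTop 0] with n hn
      rw [le_div_iff₀ (by positivity)]
      linarith [h n]
  · refine ⟨⊥, by simp, ?_, fun r => ?_⟩
    · rw [EReal.tendsto_nhds_bot_iff_real]
      intro L
      have : ∃ n : ℕ, n ≠ 0 ∧ (w n + C) / n < min (L - 1) 0 := by
        by_contra hcon
        push Not at hcon
        refine hb ⟨min (L - 1) 0, ?_⟩
        rintro _ ⟨n, rfl⟩
        by_cases hn : n = 0
        · subst hn; simp
        · exact hcon n hn
      obtain ⟨n, hn, hlt⟩ := this
      have h1 := hv.eventually_div_lt_of_div_lt hn (hlt.trans_le (min_le_left _ _))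
      have h2 : ∀ᶠ n : ℕ in atTop, -1 < C / (n : ℝ) := hC.eventually (lt_mem_nhds (by norm_num))
      filter_upwards [h1, h2] with m hm hm2
      rw [EReal.coe_lt_coe_iff]
      rw [add_div] at hm
      linarith
    · constructor
      · intro h; simp at h
      · intro h
        exfalso
        apply hb
        refine ⟨min r 0, ?_⟩
        rintro _ ⟨n, rfl⟩
        by_cases hn : n = 0
        · subst hn; simp
        · refine (min_le_left _ _).trans ?_
          have : (0:ℝ) < n := by positivity
          simp only
          rw [le_div_iff₀ this]
          linarith [h n]

end WES

open MeasureTheory Filter Topology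
open scoped Classical ENNReal NNReal

set_option linter.unusedSectionVars false
set_option linter.unusedVariables false
namespace WES
open Finset (range)

/-- block of coordinates `i, …, i+n-1` -/
def blk {A : Type} (i n : ℕ) (x : ℕ → A) : Fin n → A := fun k => x (i + k)

/-- probability that the block at `i` is `w` -/
noncomputable def Q {A : Type} [MeasurableSpace A] (μ : Measure (ℕ → A)) (i : ℕ) {n : ℕ}
    (w : Fin n → A) : ℝ := μ.real (blk i n ⁻¹' {w})

/-- block entropy -/
noncomputable def Hd {A : Type} [Fintype A] [MeasurableSpace A] (μ : Measure (ℕ → A))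
    (i n : ℕ) : ℝ := ∑ w : Fin n → A, Real.negMulLog (Q μ i w)

/-- block energy -/
noncomputable def Ud {A : Type} [Fintype A] [MeasurableSpace A] (f : List A → ℝ)
    (μ : Measure (ℕ → A)) (i n : ℕ) : ℝ :=
  ∑ w : Fin n → A, Q μ i w * Real.log (f (List.ofFn w))

/-- globally sub-multiplicative function -/
structure GS {A : Type} (f : List A → ℝ) (C : ℝ) : Prop where
  nonneg : ∀ I, 0 ≤ f I
  nil : f [] = 1
  C0 : 0 ≤ C
  sub : ∀ I J, f (I ++ J) ≤ Real.exp C * f I * f J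

/-- words of zero weight are null -/
def GoodAt {A : Type} [MeasurableSpace A] (f : List A → ℝ)
    (μ : Measure (ℕ → A)) (i n : ℕ) : Prop :=
  ∀ w : Fin n → A, f (List.ofFn w) = 0 → Q μ i w = 0

section
variable {A : Type} [Fintype A] [TopologicalSpace A] [DiscreteTopology A] [MeasurableSpace A]
  [BorelSpace A]

lemma continuous_blk (i n : ℕ) : Continuous (blk (A := A) i n) := by
  unfold blk; fun_prop

lemma measurable_blk (i n : ℕ) : Measurable (blk (A := A) i n) := by
  unfold blk; fun_prop

lemma isClopen_blk (i n : ℕ) (s : Set (Fin n → A)) : IsClopen (blk (A := A) i n ⁻¹' s) :=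
  (isClopen_discrete s).preimage (continuous_blk i n)

lemma meas_blk (i n : ℕ) (s : Set (Fin n → A)) : MeasurableSet (blk (A := A) i n ⁻¹' s) :=
  (isClopen_blk i n s).isOpen.measurableSet

lemma Q_nonneg (μ : Measure (ℕ → A)) (i : ℕ) {n : ℕ} (w : Fin n → A) : 0 ≤ Q μ i w :=
  measureReal_nonneg

lemma Q_le_one (μ : Measure (ℕ → A)) [IsProbabilityMeasure μ] (i : ℕ) {n : ℕ} (w : Fin n → A) :
    Q μ i w ≤ 1 := measureReal_le_one

lemma real_eq_sum (μ : Measure (ℕ → A)) [IsProbabilityMeasure μ] (s : Set (ℕ → A)) (i n : ℕ) :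
    μ.real s = ∑ w : Fin n → A, μ.real (s ∩ blk i n ⁻¹' {w}) := by
  have h := sum_measureReal_preimage_singleton (μ := μ.restrict s) (Finset.univ : Finset (Fin n → A))
    (f := blk i n) (fun y _ => meas_blk i n {y}) (by simp)
  simp only [Finset.coe_univ, Set.preimage_univ] at h
  rw [measureReal_restrict_apply MeasurableSet.univ, Set.univ_inter] at h
  rw [← h]
  refine Finset.sum_congr rfl fun w _ => ?_
  rw [measureReal_restrict_apply (meas_blk i n {w}), Set.inter_comm]

lemma sum_Q (μ : Measure (ℕ → A)) [IsProbabilityMeasure μ] (i n : ℕ) :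
    ∑ w : Fin n → A, Q μ i w = 1 := by
  have := real_eq_sum μ Set.univ i n
  simp only [Set.univ_inter, probReal_univ] at this
  exact this.symm

lemma blk_append (i n m : ℕ) (u : Fin n → A) (v : Fin m → A) :
    blk i (n + m) ⁻¹' {Fin.append u v} = blk i n ⁻¹' {u} ∩ blk (i + n) m ⁻¹' {v} := by
  ext x
  simp only [Set.mem_preimage, Set.mem_singleton_iff, Set.mem_inter_iff]
  constructor
  · intro h
    constructor
    · ext k
      have := congrFun h (Fin.castAdd m k)
      rw [Fin.append_left] at this
      exact this
    · ext k
      have := congrFun h (Fin.natAdd n k)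
      rw [Fin.append_right] at this
      rw [← this]
      simp [blk, add_assoc]
  · rintro ⟨rfl, rfl⟩
    ext k
    refine Fin.addCases (fun k => ?_) (fun k => ?_) k
    · rw [Fin.append_left]; rfl
    · rw [Fin.append_right]; simp [blk, add_assoc]

lemma Q_left (μ : Measure (ℕ → A)) [IsProbabilityMeasure μ] (i n m : ℕ) (u : Fin n → A) :
    ∑ v : Fin m → A, Q μ i (Fin.append u v) = Q μ i u := by
  unfold Q
  rw [real_eq_sum μ _ (i + n) m]
  simp_rw [blk_append]

lemma Q_right (μ : Measure (ℕ → A)) [IsProbabilityMeasure μ] (i n m : ℕ) (v : Fin m → A) :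
    ∑ u : Fin n → A, Q μ i (Fin.append u v) = Q μ (i + n) v := by
  unfold Q
  rw [real_eq_sum μ (blk (i + n) m ⁻¹' {v}) i n]
  simp_rw [blk_append]
  simp_rw [Set.inter_comm]

lemma sum_append (n m : ℕ) (g : (Fin (n + m) → A) → ℝ) :
    ∑ w, g w = ∑ u : Fin n → A, ∑ v : Fin m → A, g (Fin.append u v) := by
  rw [← Fintype.sum_prod_type']
  exact (Equiv.sum_comp (Fin.appendEquiv n m) g).symm

lemma Hd_sub (μ : Measure (ℕ → A)) [IsProbabilityMeasure μ] (i n m : ℕ) :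
    Hd μ i (n + m) ≤ Hd μ i n + Hd μ (i + n) m := by
  unfold Hd
  rw [sum_append]
  have := gibbs_prod (fun (u : Fin n → A) (v : Fin m → A) => Q μ i (Fin.append u v))
    (fun _ _ => Q_nonneg _ _ _) (by rw [← sum_append n m (fun w => Q μ i w)]; exact sum_Q μ i _)
  simp_rw [Q_left, Q_right] at this
  exact this

lemma GS.log_sub {f : List A → ℝ} {C : ℝ} (hf : GS f C) (I J : List A) (h : f (I ++ J) ≠ 0) :
    Real.log (f (I ++ J)) ≤ Real.log (f I) + Real.log (f J) + C := by
  have h0 : 0 < f (I ++ J) := (hf.nonneg _).lt_of_ne' h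
  have h1 := hf.sub I J
  have hI : 0 < f I := by
    refine (hf.nonneg _).lt_of_ne' fun e => ?_
    rw [e] at h1; simp at h1; linarith
  have hJ : 0 < f J := by
    refine (hf.nonneg _).lt_of_ne' fun e => ?_
    rw [e] at h1; simp at h1; linarith
  have := Real.log_le_log h0 h1
  rw [Real.log_mul (by positivity) hJ.ne', Real.log_mul (by positivity) hI.ne', Real.log_exp] at this
  linarith

lemma Ud_sub {f : List A → ℝ} {C : ℝ} (hf : GS f C) (μ : Measure (ℕ → A)) [IsProbabilityMeasure μ]
    (i n m : ℕ) (hg : GoodAt f μ i (n + m)) :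
    Ud f μ i (n + m) ≤ Ud f μ i n + Ud f μ (i + n) m + C := by
  unfold Ud
  rw [sum_append]
  have key : ∀ (u : Fin n → A) (v : Fin m → A),
      Q μ i (Fin.append u v) * Real.log (f (List.ofFn (Fin.append u v))) ≤
      Q μ i (Fin.append u v) * Real.log (f (List.ofFn u)) +
      Q μ i (Fin.append u v) * Real.log (f (List.ofFn v)) + Q μ i (Fin.append u v) * C := by
    intro u v
    by_cases h : f (List.ofFn (Fin.append u v)) = 0
    · rw [hg _ h]; simp
    · rw [List.ofFn_fin_append] at h ⊢
      rw [← mul_add, ← mul_add]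
      exact mul_le_mul_of_nonneg_left (hf.log_sub _ _ h) (Q_nonneg _ _ _)
  refine (Finset.sum_le_sum fun u _ => Finset.sum_le_sum fun v _ => key u v).trans (le_of_eq ?_)
  simp only [Finset.sum_add_distrib]
  congr 1
  · congr 1
    · simp_rw [← Finset.sum_mul, Q_left]
    · rw [Finset.sum_comm]
      simp_rw [← Finset.sum_mul, Q_right]
  · simp_rw [← Finset.sum_mul]
    rw [← sum_append n m (fun w => Q μ i w), sum_Q, one_mul]

lemma GoodAt.left {f : List A → ℝ} {C : ℝ} (hf : GS f C) {μ : Measure (ℕ → A)}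
    [IsProbabilityMeasure μ] {i n m : ℕ} (hg : GoodAt f μ i (n + m)) : GoodAt f μ i n := by
  intro u hu
  rw [← Q_left μ i n m]
  refine Finset.sum_eq_zero fun v _ => hg _ ?_
  rw [List.ofFn_fin_append]
  have := hf.sub (List.ofFn u) (List.ofFn v)
  rw [hu] at this; simp at this
  exact le_antisymm this (hf.nonneg _)

lemma GoodAt.right {f : List A → ℝ} {C : ℝ} (hf : GS f C) {μ : Measure (ℕ → A)}
    [IsProbabilityMeasure μ] {i n m : ℕ} (hg : GoodAt f μ i (n + m)) : GoodAt f μ (i + n) m := by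
  intro u hu
  rw [← Q_right μ i n m]
  refine Finset.sum_eq_zero fun v _ => hg _ ?_
  rw [List.ofFn_fin_append]
  have := hf.sub (List.ofFn v) (List.ofFn u)
  rw [hu] at this; simp at this
  exact le_antisymm this (hf.nonneg _)

lemma Hd_nonneg (μ : Measure (ℕ → A)) [IsProbabilityMeasure μ] (i n : ℕ) : 0 ≤ Hd μ i n :=
  Finset.sum_nonneg fun w _ => Real.negMulLog_nonneg (Q_nonneg _ _ _) (Q_le_one _ _ _)

lemma Hd_le (μ : Measure (ℕ → A)) [IsProbabilityMeasure μ] (i n : ℕ) :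
    Hd μ i n ≤ (Fintype.card A : ℝ) ^ n := by
  calc _ ≤ ∑ w : Fin n → A, (1:ℝ) := Finset.sum_le_sum fun w _ => by
        rcases (Q_nonneg μ i w).eq_or_lt with h | h
        · rw [← h]; simp
        · have := Real.one_sub_inv_le_log_of_pos h
          have h2 := mul_le_mul_of_nonneg_left this h.le
          rw [mul_sub, mul_inv_cancel₀ h.ne'] at h2
          unfold Real.negMulLog; linarith
    _ = _ := by simp

lemma Ud_abs_le (f : List A → ℝ) (μ : Measure (ℕ → A)) [IsProbabilityMeasure μ] (i n : ℕ) :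
    |Ud f μ i n| ≤ ∑ w : Fin n → A, |Real.log (f (List.ofFn w))| := by
  refine (Finset.abs_sum_le_sum_abs _ _).trans (Finset.sum_le_sum fun w _ => ?_)
  rw [abs_mul, abs_of_nonneg (Q_nonneg _ _ _)]
  exact mul_le_of_le_one_left (abs_nonneg _) (Q_le_one _ _ _)

lemma measurable_shift : Measurable (shiftMap (A := A)) := by
  unfold shiftMap; fun_prop

lemma continuous_shift : Continuous (shiftMap (A := A)) := by
  unfold shiftMap; fun_prop

lemma shift_blk (i n : ℕ) (x : ℕ → A) : blk i n (shiftMap x) = blk (i + 1) n x := by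
  ext k; simp [blk, shiftMap]; congr 1; ring

lemma shift_iter_blk (i n k : ℕ) (x : ℕ → A) : blk i n (shiftMap^[k] x) = blk (i + k) n x := by
  induction k generalizing x with
  | zero => rfl
  | succ k ih => rw [Function.iterate_succ_apply, ih, shift_blk]; rfl

lemma Q_shift (μ : Measure (ℕ → A)) (h : μ.map shiftMap = μ) (i : ℕ) {n : ℕ} (w : Fin n → A) :
    Q μ i w = Q μ 0 w := by
  induction i with
  | zero => rfl
  | succ i ih =>
    rw [← ih]
    conv_rhs => rw [← h]
    unfold Q
    rw [map_measureReal_apply measurable_shift (meas_blk i n {w})]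
    congr 1
    ext x
    simp [shift_blk]

lemma cyl_ofFn {n : ℕ} (w : Fin n → A) : cyl (List.ofFn w) = blk 0 n ⁻¹' {w} := by
  ext x
  simp only [cyl, Set.mem_ofPred_eq, Set.mem_preimage, Set.mem_singleton_iff]
  constructor
  · intro h
    ext k
    have := h (Fin.cast (by simp) k)
    simpa [blk] using this
  · rintro rfl k
    simp [blk]

lemma wordOf_eq (x : ℕ → A) (n : ℕ) : wordOf x n = List.ofFn (blk 0 n x) := by
  unfold wordOf blk; simp

/-- measures agreeing on initial blocks coincide -/
lemma ext_Q (μ ν : Measure (ℕ → A)) [IsProbabilityMeasure μ] [IsProbabilityMeasure ν]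
    (h : ∀ n (w : Fin n → A), Q μ 0 w = Q ν 0 w) : μ = ν := by
  have key : ∀ n, μ.map (blk 0 n) = ν.map (blk 0 n) := by
    intro n
    refine Measure.ext_of_singleton fun w => ?_
    rw [Measure.map_apply (measurable_blk 0 n) (measurableSet_singleton _),
      Measure.map_apply (measurable_blk 0 n) (measurableSet_singleton _)]
    have := h n w
    unfold Q Measure.real at this
    rwa [ENNReal.toReal_eq_toReal_iff' (by simp) (by simp)] at this
  refine ext_of_generate_finite (measurableCylinders fun _ : ℕ => A)
    generateFrom_measurableCylinders.symm isPiSystem_measurableCylinders ?_ (by simp)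
  intro s hs
  obtain ⟨I, S, hS, rfl⟩ := (mem_measurableCylinders s).1 hs
  obtain ⟨N, hN⟩ : ∃ N, ∀ i ∈ I, i < N := ⟨I.sup id + 1, fun i hi =>
    Nat.lt_succ_of_le (Finset.le_sup (f := id) hi)⟩
  let r : (Fin N → A) → (∀ i : I, A) := fun w i => w ⟨i, hN i i.2⟩
  have hr : Measurable r := by fun_prop
  have e : cylinder I S = blk 0 N ⁻¹' (r ⁻¹' S) := by
    ext x
    have : r (blk 0 N x) = I.restrict x := by
      ext i
      simp [r, blk]
    rw [mem_cylinder]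
    simp only [Set.mem_preimage, this]
  rw [e, ← Measure.map_apply (measurable_blk 0 N) (hr hS), key N,
    Measure.map_apply (measurable_blk 0 N) (hr hS)]

lemma continuous_Q (i : ℕ) {n : ℕ} (w : Fin n → A) :
    Continuous fun μ : ProbabilityMeasure (ℕ → A) => Q (μ : Measure (ℕ → A)) i w := by
  rw [continuous_iff_continuousAt]
  intro μ
  have := ProbabilityMeasure.tendsto_measure_of_null_frontier_of_tendsto' (L := 𝓝 μ)
    (μs := id) tendsto_id (E := blk i n ⁻¹' {w})
    (by rw [(isClopen_blk i n {w}).frontier_eq]; simp)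
  exact (ENNReal.tendsto_toReal (measure_ne_top _ _)).comp this

end
end WES

open MeasureTheory Filter Topology
open scoped Classical ENNReal NNReal

set_option linter.unusedSectionVars false
set_option linter.unusedVariables false
namespace WES
open Finset (range)

/-- all blocks of zero weight are null -/
def Good {A : Type} [MeasurableSpace A] (f : List A → ℝ) (μ : Measure (ℕ → A)) : Prop :=
  ∀ n, GoodAt f μ 0 n

lemma comb (w h : ℕ → ℝ) (e : EReal) (x C : ℝ) (he : e ≠ ⊤)
    (hw : Tendsto (fun n : ℕ => ((w n / n : ℝ) : EReal)) atTop (𝓝 e))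
    (hh : Tendsto (fun n : ℕ => h n / n) atTop (𝓝 x))
    (hsub : ∀ n m, w (n + m) + h (n + m) ≤ (w n + h n) + (w m + h m) + C) :
    Tendsto (fun n : ℕ => (((w n + h n) / n : ℝ) : EReal)) atTop (𝓝 (e + x)) ∧
    ∀ r : ℝ, (r : EReal) ≤ e + x ↔ ∀ n : ℕ, n * r ≤ w n + h n + C := by
  obtain ⟨e', -, ht, hr⟩ := fekete (fun n => w n + h n) C hsub
  have h1 : Tendsto (fun n : ℕ => (((w n + h n) / n : ℝ) : EReal)) atTop (𝓝 (e + x)) := by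
    have hc : ContinuousAt (fun p : EReal × EReal => p.1 + p.2) (e, (x : EReal)) :=
      EReal.continuousAt_add (Or.inl he) (Or.inr (by simp))
    have h2 := hc.tendsto.comp (hw.prodMk_nhds (EReal.tendsto_coe.2 hh))
    refine h2.congr fun n => ?_
    simp only [Function.comp]
    rw [add_div, EReal.coe_add]
  have := tendsto_nhds_unique ht h1
  subst this
  exact ⟨h1, hr⟩

section
variable {A : Type} [Fintype A] [TopologicalSpace A] [DiscreteTopology A] [MeasurableSpace A]
  [BorelSpace A]

lemma inter_full (μ : Measure (ℕ → A)) [IsProbabilityMeasure μ] {X : Set (ℕ → A)}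
    (hXm : MeasurableSet X) (hμ : μ X = 1) (s : Set (ℕ → A)) : μ (s ∩ X) = μ s := by
  refine measure_inter_conull ?_
  rw [prob_compl_eq_zero_iff hXm]; exact hμ

lemma ae_mem (μ : Measure (ℕ → A)) [IsProbabilityMeasure μ] {X : Set (ℕ → A)}
    (hXm : MeasurableSet X) (hμ : μ X = 1) : ∀ᵐ x ∂μ, x ∈ X := by
  rw [ae_iff]
  exact (prob_compl_eq_zero_iff hXm).2 hμ

lemma Hblock_eq (μ : Measure (ℕ → A)) [IsProbabilityMeasure μ] {X : Set (ℕ → A)}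
    (hXm : MeasurableSet X) (hμ : μ X = 1) (n : ℕ) : Hblock X μ n = Hd μ 0 n := by
  unfold Hblock Hd mw
  rw [← Finset.sum_neg_distrib]
  refine Finset.sum_congr rfl fun w _ => ?_
  rw [inter_full μ hXm hμ, cyl_ofFn]
  simp [Real.negMulLog, Q, Measure.real]

lemma Hd_inv (μ : Measure (ℕ → A)) (h : μ.map shiftMap = μ) (i n : ℕ) : Hd μ i n = Hd μ 0 n := by
  unfold Hd
  simp_rw [Q_shift μ h i]

lemma Ud_inv (f : List A → ℝ) (μ : Measure (ℕ → A)) (h : μ.map shiftMap = μ) (i n : ℕ) :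
    Ud f μ i n = Ud f μ 0 n := by
  unfold Ud
  simp_rw [Q_shift μ h i]

lemma Hd_subadd (μ : Measure (ℕ → A)) [IsProbabilityMeasure μ] (h : μ.map shiftMap = μ) (n m : ℕ) :
    Hd μ 0 (n + m) ≤ Hd μ 0 n + Hd μ 0 m := by
  have := Hd_sub μ 0 n m
  rwa [Hd_inv μ h (0 + n)] at this

lemma Ud_subadd {f : List A → ℝ} {C : ℝ} (hf : GS f C) (μ : Measure (ℕ → A))
    [IsProbabilityMeasure μ] (h : μ.map shiftMap = μ) (hg : Good f μ) (n m : ℕ) :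
    Ud f μ 0 (n + m) ≤ Ud f μ 0 n + Ud f μ 0 m + C := by
  have := Ud_sub hf μ 0 n m (hg _)
  rwa [Ud_inv f μ h (0 + n)] at this

lemma ent_tendsto {X : Set (ℕ → A)} (hXm : MeasurableSet X) {μ : Measure (ℕ → A)}
    (hμ : InvOn X μ) : Tendsto (fun n : ℕ => Hd μ 0 n / n) atTop (𝓝 (ent X μ)) := by
  obtain ⟨hp, hinv, hX⟩ := hμ
  obtain ⟨e, he, ht, hr⟩ := fekete (fun n => Hd μ 0 n) 0 (fun n m => by
    simpa using Hd_subadd μ hinv n m)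
  have h0 : ((0:ℝ) : EReal) ≤ e := (hr 0).2 fun n => by simpa using Hd_nonneg μ 0 n
  have hb : e ≠ ⊥ := by rintro rfl; simp at h0
  lift e to ℝ using ⟨he, hb⟩
  have ht' := EReal.tendsto_coe.1 ht
  have : ent X μ = e := by
    unfold ent
    simp_rw [Hblock_eq μ hXm hX]
    exact ht'.liminf_eq
  rw [this]; exact ht'

lemma lintegral_blk (μ : Measure (ℕ → A)) (n : ℕ) (F : (Fin n → A) → ℝ≥0∞) :
    ∫⁻ x, F (blk 0 n x) ∂μ = ∑ w, F w * μ (blk 0 n ⁻¹' {w}) := by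
  rw [← lintegral_map (f := F) (measurable_of_finite F) (measurable_blk 0 n), lintegral_fintype]
  refine Finset.sum_congr rfl fun w _ => ?_
  rw [Measure.map_apply (measurable_blk 0 n) (measurableSet_singleton _)]

lemma intlog_good (f : List A → ℝ) (hf : ∀ I, 0 ≤ f I) (μ : Measure (ℕ → A))
    [IsProbabilityMeasure μ] (n : ℕ) (hg : GoodAt f μ 0 n) :
    intlog μ (genPot f n) = (Ud f μ 0 n : EReal) := by
  unfold intlog genPot
  simp_rw [wordOf_eq]
  rw [lintegral_blk μ n (fun w => ENNReal.ofReal (Real.log (f (List.ofFn w)))),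
    lintegral_blk μ n (fun w => if f (List.ofFn w) ≤ 0 then (⊤ : ℝ≥0∞) else
      ENNReal.ofReal (-Real.log (f (List.ofFn w))))]
  have hq : ∀ w : Fin n → A, μ (blk 0 n ⁻¹' {w}) = ENNReal.ofReal (Q μ 0 w) := fun w => by
    unfold Q; rw [ofReal_measureReal]
  have e1 : ∑ w : Fin n → A, ENNReal.ofReal (Real.log (f (List.ofFn w))) * μ (blk 0 n ⁻¹' {w}) =
      ENNReal.ofReal (∑ w : Fin n → A, max (Real.log (f (List.ofFn w))) 0 * Q μ 0 w) := by
    rw [ENNReal.ofReal_sum_of_nonneg (fun w _ => mul_nonneg (le_max_right _ _) (Q_nonneg _ _ _))]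
    refine Finset.sum_congr rfl fun w _ => ?_
    rw [hq, ENNReal.ofReal_mul (le_max_right _ _), ENNReal.ofReal_max]; simp
  have e2 : ∑ w : Fin n → A, (if f (List.ofFn w) ≤ 0 then (⊤ : ℝ≥0∞) else
      ENNReal.ofReal (-Real.log (f (List.ofFn w)))) * μ (blk 0 n ⁻¹' {w}) =
      ENNReal.ofReal (∑ w : Fin n → A, max (-Real.log (f (List.ofFn w))) 0 * Q μ 0 w) := by
    rw [ENNReal.ofReal_sum_of_nonneg (fun w _ => mul_nonneg (le_max_right _ _) (Q_nonneg _ _ _))]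
    refine Finset.sum_congr rfl fun w _ => ?_
    rw [hq, ENNReal.ofReal_mul (le_max_right _ _), ENNReal.ofReal_max]
    by_cases h : f (List.ofFn w) ≤ 0
    · rw [hg w (le_antisymm h (hf _))]; simp
    · simp [h]
  rw [e1, e2, EReal.coe_ennreal_ofReal, EReal.coe_ennreal_ofReal,
    max_eq_left (Finset.sum_nonneg fun w _ => mul_nonneg (le_max_right _ _) (Q_nonneg _ _ _)),
    max_eq_left (Finset.sum_nonneg fun w _ => mul_nonneg (le_max_right _ _) (Q_nonneg _ _ _)),
    ← EReal.coe_sub, ← Finset.sum_sub_distrib]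
  congr 1
  unfold Ud
  refine Finset.sum_congr rfl fun w _ => ?_
  rw [← sub_mul, mul_comm]
  congr 1
  rcases le_total (Real.log (f (List.ofFn w))) 0 with h | h
  · rw [max_eq_right h, max_eq_left (by linarith)]; ring
  · rw [max_eq_left h, max_eq_right (by linarith)]; ring

lemma intlog_bad (f : List A → ℝ) (μ : Measure (ℕ → A))
    [IsProbabilityMeasure μ] (n : ℕ) (hg : ¬ GoodAt f μ 0 n) :
    intlog μ (genPot f n) = ⊥ := by
  unfold intlog genPot
  simp_rw [wordOf_eq]
  rw [lintegral_blk μ n (fun w => if f (List.ofFn w) ≤ 0 then (⊤ : ℝ≥0∞) else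
      ENNReal.ofReal (-Real.log (f (List.ofFn w))))]
  unfold GoodAt at hg
  push Not at hg
  obtain ⟨w, hw, hq⟩ := hg
  have : ∑ w : Fin n → A, (if f (List.ofFn w) ≤ 0 then (⊤ : ℝ≥0∞) else
      ENNReal.ofReal (-Real.log (f (List.ofFn w)))) * μ (blk 0 n ⁻¹' {w}) = ⊤ := by
    rw [ENNReal.sum_eq_top]
    refine ⟨w, Finset.mem_univ _, ?_⟩
    rw [if_pos hw.le, ENNReal.top_mul]
    intro h0
    exact hq (by unfold Q Measure.real; rw [h0]; rfl)
  rw [this]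
  simp

lemma PhiStar_bad {f : List A → ℝ} {C : ℝ} (hf : GS f C) (μ : Measure (ℕ → A))
    [IsProbabilityMeasure μ] (hg : ¬ Good f μ) : PhiStar μ (genPot f) = ⊥ := by
  unfold Good at hg
  push Not at hg
  obtain ⟨N, hN⟩ := hg
  unfold PhiStar
  have : Tendsto (fun n : ℕ => (((n : ℝ)⁻¹ : ℝ) : EReal) * intlog μ (genPot f n)) atTop (𝓝 ⊥) := by
    refine tendsto_const_nhds.congr' ?_
    filter_upwards [eventually_ge_atTop (N + 1)] with n hn
    obtain ⟨k, rfl⟩ := Nat.exists_eq_add_of_le (show N ≤ n by omega)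
    rw [intlog_bad f μ _ (fun h => hN (h.left hf)), EReal.coe_mul_bot_of_pos]
    have : 0 < N + k := by omega
    positivity
  exact this.liminf_eq

lemma PhiStar_good {f : List A → ℝ} {C : ℝ} (hf : GS f C) (μ : Measure (ℕ → A))
    [IsProbabilityMeasure μ] (h : μ.map shiftMap = μ) (hg : Good f μ) :
    PhiStar μ (genPot f) ≠ ⊤ ∧
    Tendsto (fun n : ℕ => ((Ud f μ 0 n / n : ℝ) : EReal)) atTop (𝓝 (PhiStar μ (genPot f))) := by
  obtain ⟨e, he, ht, -⟩ := fekete (fun n => Ud f μ 0 n) C (fun n m => Ud_subadd hf μ h hg n m)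
  have : PhiStar μ (genPot f) = e := by
    unfold PhiStar
    refine Tendsto.liminf_eq (ht.congr fun n => ?_)
    rw [intlog_good f hf.nonneg μ n (hg n), ← EReal.coe_mul, div_eq_inv_mul]
  rw [this]; exact ⟨he, ht⟩

lemma PhiStar_ne_top {f : List A → ℝ} {C : ℝ} (hf : GS f C) (μ : Measure (ℕ → A))
    [IsProbabilityMeasure μ] (h : μ.map shiftMap = μ) : PhiStar μ (genPot f) ≠ ⊤ := by
  by_cases hg : Good f μ
  · exact (PhiStar_good hf μ h hg).1
  · rw [PhiStar_bad hf μ hg]; simp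

lemma PhiStar_congr {X : Set (ℕ → A)} (hXm : MeasurableSet X) (μ : Measure (ℕ → A))
    [IsProbabilityMeasure μ] (hX : μ X = 1) (F G : ℕ → (ℕ → A) → ℝ)
    (h : ∀ n, ∀ x ∈ X, F n x = G n x) : PhiStar μ F = PhiStar μ G := by
  unfold PhiStar
  congr 1
  ext n
  congr 1
  unfold intlog
  congr 2
  · refine lintegral_congr_ae ?_
    filter_upwards [ae_mem μ hXm hX] with x hx
    rw [h n x hx]
  · refine lintegral_congr_ae ?_
    filter_upwards [ae_mem μ hXm hX] with x hx
    rw [h n x hx]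

/-- scaling of the potential -/
lemma PhiStar_pow {f : List A → ℝ} {C : ℝ} (hf : GS f C) (μ : Measure (ℕ → A))
    [IsProbabilityMeasure μ] (h : μ.map shiftMap = μ) (s : ℝ) (hs : 0 < s) :
    PhiStar μ (genPot (fun I => f I ^ s)) = (s : EReal) * PhiStar μ (genPot f) := by
  have hfs : GS (fun I => f I ^ s) (s * C) := by
    refine ⟨fun I => Real.rpow_nonneg (hf.nonneg I) s, by simp [hf.nil], mul_nonneg hs.le hf.C0,
      fun I J => ?_⟩
    have := Real.rpow_le_rpow (hf.nonneg _) (hf.sub I J) hs.le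
    rwa [Real.mul_rpow (mul_nonneg (Real.exp_pos _).le (hf.nonneg _)) (hf.nonneg _),
      Real.mul_rpow (Real.exp_pos _).le (hf.nonneg _), ← Real.exp_mul, mul_comm C s] at this
  have hz : ∀ I, f I ^ s = 0 ↔ f I = 0 := fun I => by
    rw [Real.rpow_eq_zero (hf.nonneg _) hs.ne']
  have hgg : Good (fun I => f I ^ s) μ ↔ Good f μ := by
    unfold Good GoodAt; simp_rw [hz]
  by_cases hg : Good f μ
  · have h1 := (PhiStar_good hf μ h hg)
    have h2 := (PhiStar_good hfs μ h (hgg.2 hg)).2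
    refine tendsto_nhds_unique h2 ?_
    have hlog : ∀ I, Real.log (f I ^ s) = s * Real.log (f I) := fun I => by
      rcases (hf.nonneg I).eq_or_lt with h | h
      · rw [← h, Real.zero_rpow hs.ne']; simp
      · exact Real.log_rpow h s
    have hU : ∀ n, Ud (fun I => f I ^ s) μ 0 n = s * Ud f μ 0 n := fun n => by
      unfold Ud
      rw [Finset.mul_sum]
      refine Finset.sum_congr rfl fun w _ => ?_
      simp only [hlog]; ring
    have h3 : Tendsto (fun n : ℕ => (s : EReal) * ((Ud f μ 0 n / n : ℝ) : EReal)) atTop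
        (𝓝 ((s : EReal) * PhiStar μ (genPot f))) :=
      EReal.Tendsto.const_mul h1.2 (Or.inl (by simp)) (Or.inl (by simp))
    refine h3.congr fun n => ?_
    rw [← EReal.coe_mul, hU, mul_div_assoc]
  · rw [PhiStar_bad hf μ hg, PhiStar_bad hfs μ (fun h => hg (hgg.1 h)),
      EReal.coe_mul_bot_of_pos hs]

end
end WES

open MeasureTheory Filter Topology
open scoped Classical ENNReal NNReal

set_option linter.unusedSectionVars false
set_option linter.unusedVariables false
namespace WES
open Finset (range)

/-- projected weight, as a function on words -/
noncomputable def psi {A B : Type} [Fintype A] (π : A → B) (f : List A → ℝ) (J : List B) : ℝ :=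
  ∑ w : Fin J.length → A, if List.map π (List.ofFn w) = J then f (List.ofFn w) else 0

section
variable {A : Type} [Fintype A] [TopologicalSpace A] [DiscreteTopology A] [MeasurableSpace A]
  [BorelSpace A]
variable {B : Type} [Fintype B] [TopologicalSpace B] [DiscreteTopology B] [MeasurableSpace B]
  [BorelSpace B]

lemma continuous_block (π : A → B) : Continuous (blockMap π) := by
  have : Continuous π := continuous_of_discreteTopology
  unfold blockMap; fun_prop

lemma measurable_block (π : A → B) : Measurable (blockMap π) := by
  have : Measurable π := measurable_of_finite π
  unfold blockMap; fun_prop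

lemma blk_block (π : A → B) (i n : ℕ) (x : ℕ → A) : blk i n (blockMap π x) = π ∘ blk i n x := rfl

lemma Q_push (π : A → B) (μ : Measure (ℕ → A)) [IsProbabilityMeasure μ] (i : ℕ) {n : ℕ}
    (v : Fin n → B) :
    Q (μ.map (blockMap π)) i v = ∑ w : Fin n → A with π ∘ w = v, Q μ i w := by
  unfold Q
  rw [map_measureReal_apply (measurable_block π) (meas_blk i n {v}),
    sum_measureReal_preimage_singleton _ (fun y _ => meas_blk i n {y}) (by simp)]
  congr 1
  ext x
  simp [blk_block]

lemma psi_ofFn (π : A → B) (f : List A → ℝ) {n : ℕ} (v : Fin n → B) :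
    psi π f (List.ofFn v) = ∑ w : Fin n → A with π ∘ w = v, f (List.ofFn w) := by
  have gen : ∀ (J : List B) (n : ℕ) (h : J.length = n), psi π f J =
      ∑ w : Fin n → A, if List.map π (List.ofFn w) = J then f (List.ofFn w) else 0 := by
    intro J n h; subst h; rfl
  rw [gen _ n (by simp), Finset.sum_filter]
  refine Finset.sum_congr rfl fun w _ => ?_
  simp only [List.map_ofFn, List.ofFn_inj]

lemma comp_append (π : A → B) {n m : ℕ} (u : Fin n → A) (u' : Fin m → A) (v : Fin n → B)
    (v' : Fin m → B) : π ∘ Fin.append u u' = Fin.append v v' ↔ π ∘ u = v ∧ π ∘ u' = v' := by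
  constructor
  · intro h
    constructor
    · ext k; have := congrFun h (Fin.castAdd m k); simpa using this
    · ext k; have := congrFun h (Fin.natAdd n k); simpa using this
  · rintro ⟨rfl, rfl⟩
    ext k
    refine Fin.addCases (fun k => ?_) (fun k => ?_) k <;> simp

lemma psi_GS (π : A → B) {f : List A → ℝ} {C : ℝ} (hf : GS f C) : GS (psi π f) C := by
  refine ⟨fun I => ?_, ?_, hf.C0, fun I J => ?_⟩
  · unfold psi
    refine Finset.sum_nonneg fun w _ => ?_
    split_ifs
    · exact hf.nonneg _
    · exact le_rfl
  · have := psi_ofFn π f (n := 0) (fun k => k.elim0)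
    simp only [List.ofFn_zero] at this
    rw [this]
    rw [Finset.filter_true_of_mem (fun w _ => Subsingleton.elim _ _)]
    simp [hf.nil]
  · obtain ⟨n, v, rfl⟩ : ∃ n, ∃ v : Fin n → B, I = List.ofFn v := ⟨_, I.get, by simp⟩
    obtain ⟨m, v', rfl⟩ : ∃ n, ∃ v : Fin n → B, J = List.ofFn v := ⟨_, J.get, by simp⟩
    rw [← List.ofFn_fin_append, psi_ofFn, psi_ofFn, psi_ofFn, Finset.sum_filter, sum_append,
      mul_assoc, Finset.sum_mul_sum, Finset.mul_sum, Finset.sum_filter]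
    refine Finset.sum_le_sum fun u _ => ?_
    split_ifs with h
    · rw [Finset.mul_sum, Finset.sum_filter]
      refine Finset.sum_le_sum fun u' _ => ?_
      by_cases h' : π ∘ u' = v'
      · rw [if_pos ((comp_append π u u' v v').2 ⟨h, h'⟩), if_pos h', List.ofFn_fin_append, ← mul_assoc]
        exact hf.sub _ _
      · rw [if_neg (fun h2 => h' ((comp_append π u u' v v').1 h2).2), if_neg h']
    · refine (Finset.sum_eq_zero fun u' _ => ?_).le
      rw [if_neg (fun h2 => h ((comp_append π u u' v v').1 h2).1)]

lemma InvOn_push (π : A → B) {X : Set (ℕ → A)} {Y : Set (ℕ → B)} (hπ : blockMap π '' X = Y)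
    (hYm : MeasurableSet Y) {μ : Measure (ℕ → A)} (hμ : InvOn X μ) :
    InvOn Y (μ.map (blockMap π)) := by
  obtain ⟨hp, hinv, hX⟩ := hμ
  have hp' : IsProbabilityMeasure (μ.map (blockMap π)) :=
    Measure.isProbabilityMeasure_map (measurable_block π).aemeasurable
  refine ⟨hp', ?_, ?_⟩
  · rw [Measure.map_map measurable_shift (measurable_block π)]
    conv_rhs => rw [← hinv]
    rw [Measure.map_map (measurable_block π) measurable_shift]
    rfl
  · refine le_antisymm prob_le_one ?_
    rw [Measure.map_apply (measurable_block π) hYm, ← hX]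
    refine measure_mono fun x hx => ?_
    rw [← hπ]
    exact ⟨x, hx, rfl⟩

lemma Good_push (π : A → B) {f : List A → ℝ} (hf : ∀ I, 0 ≤ f I) (μ : Measure (ℕ → A))
    [IsProbabilityMeasure μ] (hg : Good f μ) : Good (psi π f) (μ.map (blockMap π)) := by
  intro n v hv
  rw [psi_ofFn, Finset.sum_eq_zero_iff_of_nonneg (fun _ _ => hf _)] at hv
  rw [Q_push]
  exact Finset.sum_eq_zero fun w hw => hg n w (hv w hw)

lemma upper_n (π : A → B) {f : List A → ℝ} (hf : ∀ I, 0 ≤ f I) (μ : Measure (ℕ → A))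
    [IsProbabilityMeasure μ] (hg : Good f μ) (n : ℕ) :
    Ud f μ 0 n + Hd μ 0 n ≤ Ud (psi π f) (μ.map (blockMap π)) 0 n + Hd (μ.map (blockMap π)) 0 n := by
  have e1 : Ud f μ 0 n + Hd μ 0 n =
      ∑ w : Fin n → A, (Real.negMulLog (Q μ 0 w) + Q μ 0 w * Real.log (f (List.ofFn w))) := by
    unfold Ud Hd; rw [Finset.sum_add_distrib, add_comm]
  have e2 : Ud (psi π f) (μ.map (blockMap π)) 0 n + Hd (μ.map (blockMap π)) 0 n =
      ∑ v : Fin n → B, (Real.negMulLog (Q (μ.map (blockMap π)) 0 v) +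
        Q (μ.map (blockMap π)) 0 v * Real.log (psi π f (List.ofFn v))) := by
    unfold Ud Hd; rw [Finset.sum_add_distrib, add_comm]
  rw [e1, e2, ← Finset.sum_fiberwise Finset.univ (fun w : Fin n → A => π ∘ w)]
  refine Finset.sum_le_sum fun v _ => ?_
  rw [Q_push, psi_ofFn]
  exact logsum _ _ _ (fun _ _ => Q_nonneg _ _ _) (fun _ _ => hf _) (fun w _ h => hg n w h)

lemma eq_limit {X : Set (ℕ → A)} (hXm : MeasurableSet X) {f : List A → ℝ} {C : ℝ} (hf : GS f C)
    {μ : Measure (ℕ → A)} (hμ : InvOn X μ) (hg : Good f μ) :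
    Tendsto (fun n : ℕ => (((Ud f μ 0 n + Hd μ 0 n) / n : ℝ) : EReal)) atTop
      (𝓝 (PhiStar μ (genPot f) + (ent X μ : ℝ))) ∧
    ∀ r : ℝ, (r : EReal) ≤ PhiStar μ (genPot f) + (ent X μ : ℝ) ↔
      ∀ n : ℕ, n * r ≤ Ud f μ 0 n + Hd μ 0 n + C := by
  have hp := hμ.1
  refine comb _ _ _ _ C (PhiStar_good hf μ hμ.2.1 hg).1 (PhiStar_good hf μ hμ.2.1 hg).2
    (ent_tendsto hXm hμ) fun n m => ?_
  linarith [Ud_subadd hf μ hμ.2.1 hg n m, Hd_subadd μ hμ.2.1 n m]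

theorem rvp_upper (π : A → B) {X : Set (ℕ → A)} {Y : Set (ℕ → B)} (hπ : blockMap π '' X = Y)
    (hXm : MeasurableSet X) (hYm : MeasurableSet Y) {f : List A → ℝ} {C : ℝ} (hf : GS f C)
    {μ : Measure (ℕ → A)} (hμ : InvOn X μ) :
    PhiStar μ (genPot f) + (ent X μ : ℝ) ≤
      PhiStar (μ.map (blockMap π)) (genPot (psi π f)) + (ent Y (μ.map (blockMap π)) : ℝ) := by
  have hp := hμ.1
  by_cases hg : Good f μ
  · have h1 := (eq_limit hXm hf hμ hg).1
    have h2 := (eq_limit hYm (psi_GS π hf) (InvOn_push π hπ hYm hμ)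
      (Good_push π hf.nonneg μ hg)).1
    refine le_of_tendsto_of_tendsto' h1 h2 fun n => ?_
    rw [EReal.coe_le_coe_iff]
    exact div_le_div_of_nonneg_right (upper_n π hf.nonneg μ hg n) (Nat.cast_nonneg n)
  · rw [PhiStar_bad hf μ hg]; simp

end
end WES

open MeasureTheory Filter Topology
open scoped Classical ENNReal NNReal

set_option linter.unusedSectionVars false
set_option linter.unusedVariables false
namespace WES
open Finset (range)

section
variable {A : Type} [Fintype A] [TopologicalSpace A] [DiscreteTopology A] [MeasurableSpace A]
  [BorelSpace A]
variable {B : Type} [Fintype B] [TopologicalSpace B] [DiscreteTopology B] [MeasurableSpace B]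
  [BorelSpace B]

/-- optimal lift of an `n`-block distribution -/
lemma exists_mn (π : A → B) {X : Set (ℕ → A)} (hXne : X.Nonempty) (hXm : MeasurableSet X)
    {f : List A → ℝ} {C : ℝ} (hf : GS f C) (hfX : ∀ I, f I ≠ 0 → Lang X I)
    (ν : Measure (ℕ → B)) [IsProbabilityMeasure ν] (n : ℕ) (hg : GoodAt (psi π f) ν 0 n) :
    ∃ m : Measure (ℕ → A), IsProbabilityMeasure m ∧ m X = 1 ∧
      (∀ v : Fin n → B, Q (m.map (blockMap π)) 0 v = Q ν 0 v) ∧ GoodAt f m 0 n ∧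
      Ud f m 0 n + Hd m 0 n = Ud (psi π f) ν 0 n + Hd ν 0 n := by
  obtain ⟨x0, hx0⟩ := hXne
  have hx : ∀ w : Fin n → A, ∃ x ∈ X, f (List.ofFn w) ≠ 0 → blk 0 n x = w := by
    intro w
    by_cases h : f (List.ofFn w) = 0
    · exact ⟨x0, hx0, fun h' => absurd h h'⟩
    · obtain ⟨x, hx, hxX⟩ := hfX _ h
      rw [cyl_ofFn] at hx
      exact ⟨x, hxX, fun _ => hx⟩
  choose x hxX hxw using hx
  set g : (Fin n → A) → ℝ := fun w =>
    Q ν 0 (π ∘ w) * (f (List.ofFn w) / psi π f (List.ofFn (π ∘ w))) with hgdef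
  have hψ := psi_GS π hf
  have hg0 : ∀ w, 0 ≤ g w := fun w =>
    mul_nonneg (Q_nonneg _ _ _) (div_nonneg (hf.nonneg _) (hψ.nonneg _))
  have hfib : ∀ v : Fin n → B, ∑ w : Fin n → A with π ∘ w = v, g w = Q ν 0 v := by
    intro v
    have : ∑ w : Fin n → A with π ∘ w = v, g w =
        ∑ w : Fin n → A with π ∘ w = v, Q ν 0 v * (f (List.ofFn w) / psi π f (List.ofFn v)) := by
      refine Finset.sum_congr rfl fun w hw => ?_
      rw [Finset.mem_filter] at hw
      simp only [hgdef, hw.2]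
    rw [this, ← Finset.mul_sum, ← Finset.sum_div, ← psi_ofFn]
    by_cases h : psi π f (List.ofFn v) = 0
    · rw [hg v h]; simp
    · rw [div_self h, mul_one]
  set m : Measure (ℕ → A) := ∑ w, ENNReal.ofReal (g w) • Measure.dirac (x w) with hm
  have hms : ∀ s, MeasurableSet s → m s = ∑ w, ENNReal.ofReal (g w) * s.indicator 1 (x w) := by
    intro s hs
    simp only [hm, Measure.finsetSum_apply, Measure.smul_apply, smul_eq_mul]
    refine Finset.sum_congr rfl fun w _ => ?_
    rw [Measure.dirac_apply' _ hs]
  have htot : ∑ w, ENNReal.ofReal (g w) = 1 := by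
    rw [← ENNReal.ofReal_sum_of_nonneg (fun w _ => hg0 w),
      ← Finset.sum_fiberwise Finset.univ (fun w : Fin n → A => π ∘ w)]
    simp_rw [hfib]
    rw [sum_Q]; simp
  have hmp : IsProbabilityMeasure m := ⟨by
    rw [hms _ MeasurableSet.univ]; simpa using htot⟩
  have hmQ : ∀ w : Fin n → A, Q m 0 w = g w := by
    intro w
    unfold Q Measure.real
    rw [hms _ (meas_blk 0 n {w}), Finset.sum_eq_single w]
    · by_cases h : f (List.ofFn w) = 0
      · simp [hgdef, h]
      · rw [Set.indicator_of_mem (show x w ∈ _ from hxw w h)]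
        simp [ENNReal.toReal_ofReal (hg0 w)]
    · intro u _ huw
      by_cases h : f (List.ofFn u) = 0
      · simp [hgdef, h]
      · rw [Set.indicator_of_notMem]
        · simp
        · intro h2
          have := hxw u h
          rw [Set.mem_preimage, this] at h2
          exact huw h2
    · simp
  refine ⟨m, hmp, ?_, ?_, ?_, ?_⟩
  · rw [hms _ hXm, ← htot]
    refine Finset.sum_congr rfl fun w _ => ?_
    rw [Set.indicator_of_mem (hxX w)]; simp
  · intro v
    rw [Q_push]; simp_rw [hmQ]; exact hfib v
  · intro w hw
    rw [hmQ]; simp [hgdef, hw]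
  · unfold Ud Hd
    rw [← Finset.sum_add_distrib, ← Finset.sum_add_distrib,
      ← Finset.sum_fiberwise Finset.univ (fun w : Fin n → A => π ∘ w)]
    refine Finset.sum_congr rfl fun v _ => ?_
    by_cases hq : Q ν 0 v = 0
    · rw [hq]
      simp only [zero_mul, Real.negMulLog_zero, add_zero]
      refine Finset.sum_eq_zero fun w hw => ?_
      rw [Finset.mem_filter] at hw
      rw [hmQ]; simp [hgdef, hw.2, hq]
    have hp : psi π f (List.ofFn v) ≠ 0 := fun h => hq (hg v h)
    have : ∀ w ∈ Finset.univ.filter (fun w : Fin n → A => π ∘ w = v),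
        Q m 0 w * Real.log (f (List.ofFn w)) + Real.negMulLog (Q m 0 w) =
        g w * (Real.log (psi π f (List.ofFn v)) - Real.log (Q ν 0 v)) := by
      intro w hw
      rw [Finset.mem_filter] at hw
      rw [hmQ]
      by_cases h : f (List.ofFn w) = 0
      · simp [hgdef, h]
      · unfold Real.negMulLog
        have : Real.log (g w) = Real.log (Q ν 0 v) + (Real.log (f (List.ofFn w)) -
            Real.log (psi π f (List.ofFn v))) := by
          simp only [hgdef, hw.2]
          rw [Real.log_mul hq (div_ne_zero h hp), Real.log_div h hp]
        rw [this]; ring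
    rw [Finset.sum_congr rfl this, ← Finset.sum_mul, hfib]
    unfold Real.negMulLog; ring

lemma shift_iter_blk_pre (i k : ℕ) {l : ℕ} (w : Fin l → A) :
    shiftMap^[k] ⁻¹' (blk i l ⁻¹' {w}) = blk (i + k) l ⁻¹' {w} := by
  ext x
  simp only [Set.mem_preimage, shift_iter_blk]

lemma Q_map_shift (μ : Measure (ℕ → A)) (i : ℕ) {l : ℕ} (w : Fin l → A) :
    Q (μ.map shiftMap) i w = Q μ (i + 1) w := by
  unfold Q
  rw [map_measureReal_apply measurable_shift (meas_blk i l {w})]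
  congr 1
  ext x
  simp only [Set.mem_preimage, shift_blk]

/-- Krylov–Bogolyubov -/
lemma KB {X : Set (ℕ → A)} (hXc : IsCompact X) (hXs : shiftMap '' X ⊆ X)
    (m : ℕ → Measure (ℕ → A)) (hm : ∀ n, IsProbabilityMeasure (m n)) (hmX : ∀ n, m n X = 1) :
    ∃ (F : Filter ℕ) (μ : Measure (ℕ → A)), F ≤ atTop ∧ F.NeBot ∧ InvOn X μ ∧
      ∀ (i l : ℕ) (w : Fin l → A),
        Tendsto (fun n : ℕ => (∑ k ∈ range (n + 1), Q (m n) (i + k) w) / ((n : ℝ) + 1)) F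
          (𝓝 (Q μ i w)) := by
  have hXcl : IsClosed X := hXc.isClosed
  have hXm : MeasurableSet X := hXcl.measurableSet
  have hit : ∀ k, Measurable (shiftMap (A := A))^[k] := fun k => measurable_shift.iterate k
  set M : ℕ → Measure (ℕ → A) := fun n =>
    (ENNReal.ofReal ((n : ℝ) + 1)⁻¹) • ∑ k ∈ range (n + 1), (m n).map shiftMap^[k] with hM
  have hMs : ∀ n s, MeasurableSet s → M n s =
      ENNReal.ofReal ((n : ℝ) + 1)⁻¹ * ∑ k ∈ range (n + 1), m n (shiftMap^[k] ⁻¹' s) := by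
    intro n s hs
    simp only [hM, Measure.smul_apply, Measure.finsetSum_apply, smul_eq_mul]
    congr 1
    refine Finset.sum_congr rfl fun k _ => Measure.map_apply (hit k) hs
  have h1 : ∀ n s, MeasurableSet s → (∀ k, m n (shiftMap^[k] ⁻¹' s) = 1) → M n s = 1 := by
    intro n s hs h
    rw [hMs n s hs]
    simp only [h, Finset.sum_const, Finset.card_range, nsmul_eq_mul, mul_one]
    rw [ENNReal.ofReal_inv_of_pos (by positivity)]
    rw [show ((n : ℝ) + 1) = ((n + 1 : ℕ) : ℝ) by push_cast; ring, ENNReal.ofReal_natCast]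
    exact ENNReal.inv_mul_cancel (by simp) (by simp)
  have hMp : ∀ n, IsProbabilityMeasure (M n) := fun n =>
    ⟨h1 n _ MeasurableSet.univ fun k => by simp⟩
  have hXk : ∀ k, X ⊆ shiftMap^[k] ⁻¹' X := by
    intro k
    induction k with
    | zero => exact fun x hx => hx
    | succ k ih =>
      intro x hx
      rw [Set.mem_preimage, Function.iterate_succ_apply']
      exact hXs ⟨_, ih hx, rfl⟩
  have hMX : ∀ n, M n X = 1 := fun n => h1 n X hXm fun k =>
    le_antisymm prob_le_one ((hmX n).symm.le.trans (measure_mono (hXk k)))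
  have hMQ : ∀ n i l (w : Fin l → A), Q (M n) i w =
      (∑ k ∈ range (n + 1), Q (m n) (i + k) w) / ((n : ℝ) + 1) := by
    intro n i l w
    unfold Q Measure.real
    rw [hMs n _ (meas_blk i l {w}), ENNReal.toReal_mul, ENNReal.toReal_ofReal (by positivity),
      ENNReal.toReal_sum (fun k _ => measure_ne_top _ _)]
    simp_rw [shift_iter_blk_pre]
    rw [div_eq_inv_mul]
  let P : ℕ → ProbabilityMeasure (ℕ → A) := fun n => ⟨M n, hMp n⟩
  let F : Ultrafilter ℕ := hyperfilter ℕ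
  obtain ⟨μ, -, hμ⟩ := isCompact_univ.ultrafilter_le_nhds (F.map P) (by simp)
  have hlim : Tendsto P F (𝓝 μ) := hμ
  have hFle : (F : Filter ℕ) ≤ atTop := Nat.hyperfilter_le_atTop
  have hQlim : ∀ (i l : ℕ) (w : Fin l → A),
        Tendsto (fun n : ℕ => (∑ k ∈ range (n + 1), Q (m n) (i + k) w) / ((n : ℝ) + 1)) F
          (𝓝 (Q (μ : Measure (ℕ → A)) i w)) := by
    intro i l w
    have := ((continuous_Q i w).tendsto μ).comp hlim
    refine this.congr fun n => ?_
    exact hMQ n i l w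
  refine ⟨F, μ, hFle, inferInstance, ⟨inferInstance, ?_, ?_⟩, hQlim⟩
  · have hpm : IsProbabilityMeasure ((μ : Measure (ℕ → A)).map shiftMap) :=
      Measure.isProbabilityMeasure_map measurable_shift.aemeasurable
    refine ext_Q _ _ fun l w => ?_
    have e1 : Q ((μ : Measure (ℕ → A)).map shiftMap) 0 w = Q (μ : Measure (ℕ → A)) 1 w :=
      Q_map_shift _ 0 w
    rw [e1, ← sub_eq_zero]
    have hd := (hQlim 1 l w).sub (hQlim 0 l w)
    refine tendsto_nhds_unique hd ?_
    have hz : Tendsto (fun n : ℕ => (2:ℝ) / ((n : ℝ) + 1)) F (𝓝 0) := by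
      have := (tendsto_one_div_add_atTop_nhds_zero_nat (𝕜 := ℝ)).const_mul 2
      simp only [mul_zero, mul_one_div] at this
      exact this.mono_left hFle
    refine squeeze_zero_norm (fun n => ?_) hz
    rw [← sub_div, ← Finset.sum_sub_distrib]
    have : ∀ k, Q (m n) (1 + k) w - Q (m n) (0 + k) w =
        Q (m n) (k + 1) w - Q (m n) k w := fun k => by
      rw [zero_add, add_comm]
    simp_rw [this]
    rw [Finset.sum_range_sub (fun j => Q (m n) j w), norm_div, Real.norm_of_nonneg (by positivity : (0:ℝ) ≤ (n:ℝ) + 1)]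
    refine div_le_div_of_nonneg_right ?_ (by positivity)
    rw [Real.norm_eq_abs, abs_le]
    have := hm n
    constructor <;> linarith [Q_nonneg (m n) (n+1) w, Q_le_one (m n) (n+1) w, Q_nonneg (m n) 0 w,
      Q_le_one (m n) 0 w]
  · refine le_antisymm prob_le_one ?_
    have := ProbabilityMeasure.limsup_measure_closed_le_of_tendsto hlim hXcl
    refine le_trans ?_ this
    have : (fun n => (P n : Measure (ℕ → A)) X) = fun _ => 1 := funext hMX
    rw [this, limsup_const]

lemma avg_lim (a : ℕ → ℕ → ℝ) (K c : ℝ) (l : ℕ) (hK : ∀ n k, |a n k| ≤ K)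
    (hc : ∀ n k, k + l ≤ n + 1 → a n k = c) :
    Tendsto (fun n : ℕ => (∑ k ∈ range (n + 1), a n k) / ((n : ℝ) + 1)) atTop (𝓝 c) := by
  rw [tendsto_iff_norm_sub_tendsto_zero]
  have hz : Tendsto (fun n : ℕ => (l * (K + |c|)) / ((n : ℝ) + 1)) atTop (𝓝 0) := by
    have := (tendsto_one_div_add_atTop_nhds_zero_nat (𝕜 := ℝ)).const_mul (l * (K + |c|))
    simpa only [mul_zero, mul_one_div] using this
  refine squeeze_zero (fun _ => norm_nonneg _) (fun n => ?_) hz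
  have hn : (0:ℝ) < (n:ℝ) + 1 := by positivity
  have e : (∑ k ∈ range (n + 1), a n k) / ((n : ℝ) + 1) - c =
      (∑ k ∈ range (n + 1), (a n k - c)) / ((n : ℝ) + 1) := by
    rw [Finset.sum_sub_distrib]
    simp only [Finset.sum_const, Finset.card_range, nsmul_eq_mul]
    push_cast
    field_simp
  rw [e, norm_div, Real.norm_of_nonneg hn.le]
  refine div_le_div_of_nonneg_right ?_ hn.le
  have hKc : 0 ≤ K + |c| := add_nonneg ((abs_nonneg _).trans (hK 0 0)) (abs_nonneg _)
  have : ∑ k ∈ range (n + 1), (a n k - c) =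
      ∑ k ∈ (range (n + 1)).filter (fun k => n + 1 < k + l), (a n k - c) := by
    rw [Finset.sum_filter_of_ne]
    intro k _ hk
    by_contra h
    exact hk (by rw [hc n k (by omega), sub_self])
  rw [this, Real.norm_eq_abs]
  refine (Finset.abs_sum_le_sum_abs _ _).trans ?_
  refine (Finset.sum_le_card_nsmul _ _ (K + |c|) fun k _ => ?_).trans ?_
  · exact (abs_sub _ _).trans (add_le_add (hK _ _) le_rfl)
  · rw [nsmul_eq_mul]
    refine mul_le_mul_of_nonneg_right ?_ hKc
    norm_cast
    have : (range (n + 1)).filter (fun k => n + 1 < k + l) ⊆ Finset.Ico (n + 1 - l) (n + 1) := by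
      intro k hk
      rw [Finset.mem_filter, Finset.mem_range] at hk
      rw [Finset.mem_Ico]; omega
    refine (Finset.card_le_card this).trans ?_
    rw [Nat.card_Ico]; omega

lemma Q_initial (m ν : Measure (ℕ → A)) [IsProbabilityMeasure m] [IsProbabilityMeasure ν] (N : ℕ)
    (h : ∀ v : Fin N → A, Q m 0 v = Q ν 0 v) (k l : ℕ) (hkl : k + l ≤ N) (v : Fin l → A) :
    Q m k v = Q ν k v := by
  obtain ⟨r, rfl⟩ := Nat.exists_eq_add_of_le hkl
  have h1 : ∀ u : Fin (k + l) → A, Q m 0 u = Q ν 0 u := fun u => by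
    rw [← Q_left m 0 (k + l) r, ← Q_left ν 0 (k + l) r]; simp_rw [h]
  have h2 := Q_right m 0 k l v
  have h3 := Q_right ν 0 k l v
  rw [zero_add] at h2 h3
  rw [← h2, ← h3]; simp_rw [h1]

lemma GoodAt_sub {f : List A → ℝ} {C : ℝ} (hf : GS f C) {m : Measure (ℕ → A)}
    [IsProbabilityMeasure m] {N : ℕ} (h : GoodAt f m 0 N) (k l : ℕ) (hkl : k + l ≤ N) :
    GoodAt f m k l := by
  obtain ⟨r, rfl⟩ := Nat.exists_eq_add_of_le hkl
  have := (GoodAt.left hf h).right hf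
  rwa [zero_add] at this

end
end WES

open MeasureTheory Filter Topology
open scoped Classical ENNReal NNReal

set_option linter.unusedSectionVars false
set_option linter.unusedVariables false
namespace WES
open Finset (range)

section
variable {A : Type} [Fintype A] [TopologicalSpace A] [DiscreteTopology A] [MeasurableSpace A]
  [BorelSpace A]
variable {B : Type} [Fintype B] [TopologicalSpace B] [DiscreteTopology B] [MeasurableSpace B]
  [BorelSpace B]

lemma Ud_zero {f : List A → ℝ} {C : ℝ} (hf : GS f C) (μ : Measure (ℕ → A)) (i : ℕ) :
    Ud f μ i 0 = 0 := by
  unfold Ud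
  refine Finset.sum_eq_zero fun w _ => ?_
  simp [hf.nil]

/-- averaged block inequality -/
lemma avg_ineq {f : List A → ℝ} {C : ℝ} (hf : GS f C) (m : Measure (ℕ → A))
    [IsProbabilityMeasure m] (n l : ℕ) (hl : l ≤ n + 1) (hg : GoodAt f m 0 (n + 1)) (K : ℝ)
    (hK : ∀ i p, p ≤ l → |Ud f m i p + Hd m i p| ≤ K) :
    l * (Ud f m 0 (n + 1) + Hd m 0 (n + 1)) ≤ ((n : ℝ) + 1) *
      (∑ w : Fin l → A, (((∑ k ∈ range (n + 1), Q m (0 + k) w) / ((n : ℝ) + 1)) *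
          Real.log (f (List.ofFn w)) +
        Real.negMulLog ((∑ k ∈ range (n + 1), Q m (0 + k) w) / ((n : ℝ) + 1)))) +
      ((n : ℝ) + 2) * C + l * (3 * K + C) := by
  have hn : (0:ℝ) < (n:ℝ) + 1 := by positivity
  have hK0 : 0 ≤ K := (abs_nonneg _).trans (hK 0 0 (Nat.zero_le _))
  have h1 := telescoping (fun i p => Ud f m i p + Hd m i p) (n + 1) l hl C K hf.C0
    (fun i p q h => by
      have := Ud_sub hf m i p q (GoodAt_sub hf hg _ _ (by omega))
      linarith [Hd_sub m i p q])
    (fun i p hp _ => (le_abs_self _).trans (hK i p hp))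
  have h2 : ∑ k ∈ range (n + 1 - l + 1), (Ud f m k l + Hd m k l) ≤
      ∑ k ∈ range (n + 1), (Ud f m k l + Hd m k l) + l * K := by
    rcases Nat.eq_zero_or_pos l with h0 | h0
    · subst h0
      have hz : ∀ k, Ud f m k 0 + Hd m k 0 = 0 := by
        intro k
        rw [Ud_zero hf, zero_add]
        unfold Hd
        have := sum_Q m k 0
        rw [Fintype.sum_unique] at this ⊢
        rw [this]; simp
      simp [hz]
    · have hle : n + 1 - l + 1 ≤ n + 1 := by omega
      rw [← Finset.sum_range_add_sum_Ico _ hle]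
      have : -(l * K) ≤ ∑ k ∈ Finset.Ico (n + 1 - l + 1) (n + 1), (Ud f m k l + Hd m k l) := by
        have := Finset.card_nsmul_le_sum (Finset.Ico (n + 1 - l + 1) (n + 1))
          (fun k => Ud f m k l + Hd m k l) (-K) (fun k _ => (abs_le.1 (hK k l le_rfl)).1)
        refine le_trans ?_ this
        rw [nsmul_eq_mul, Nat.card_Ico, mul_neg, neg_le_neg_iff]
        refine mul_le_mul_of_nonneg_right ?_ hK0
        norm_cast; omega
      linarith
  have h3 : ∑ k ∈ range (n + 1), (Ud f m k l + Hd m k l) ≤ ((n : ℝ) + 1) *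
      (∑ w : Fin l → A, (((∑ k ∈ range (n + 1), Q m (0 + k) w) / ((n : ℝ) + 1)) *
          Real.log (f (List.ofFn w)) +
        Real.negMulLog ((∑ k ∈ range (n + 1), Q m (0 + k) w) / ((n : ℝ) + 1)))) := by
    unfold Ud Hd
    simp_rw [← Finset.sum_add_distrib]
    rw [Finset.sum_comm, Finset.mul_sum]
    refine Finset.sum_le_sum fun w _ => ?_
    rw [Finset.sum_add_distrib, mul_add]
    refine add_le_add (le_of_eq ?_) ?_
    · rw [← Finset.sum_mul, ← mul_assoc, mul_div_cancel₀ _ hn.ne']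
      simp_rw [zero_add]
    · have := Real.concaveOn_negMulLog.le_map_sum (t := range (n + 1))
        (w := fun _ => ((n:ℝ) + 1)⁻¹) (p := fun k => Q m k w) (fun _ _ => by positivity)
        (by simp; field_simp) (fun k _ => Q_nonneg _ _ _)
      simp only [smul_eq_mul, ← Finset.mul_sum] at this
      simp_rw [zero_add]
      rw [div_eq_inv_mul]
      calc _ = ((n:ℝ) + 1) * (((n:ℝ) + 1)⁻¹ * ∑ i ∈ range (n + 1), Real.negMulLog (Q m i w)) := by
            field_simp
        _ ≤ _ := mul_le_mul_of_nonneg_left this hn.le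
  push_cast at h1
  nlinarith

theorem rvp_lower_good (π : A → B) {X : Set (ℕ → A)} {Y : Set (ℕ → B)} (hX : IsSubshift X)
    (hYm : MeasurableSet Y) {f : List A → ℝ} {C : ℝ} (hf : GS f C)
    (hfX : ∀ I, f I ≠ 0 → Lang X I) {ν : Measure (ℕ → B)} (hν : InvOn Y ν)
    (hg : Good (psi π f) ν) :
    ∃ μ, InvOn X μ ∧ μ.map (blockMap π) = ν ∧
      PhiStar ν (genPot (psi π f)) + (ent Y ν : ℝ) ≤ PhiStar μ (genPot f) + (ent X μ : ℝ) := by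
  have hXm : MeasurableSet X := hX.2.1.isClosed.measurableSet
  have hνp := hν.1
  choose m hmp hmX hmQ hmg hmE using fun n : ℕ =>
    exists_mn π hX.1 hXm hf hfX ν (n + 1) (hg (n + 1))
  obtain ⟨F, μ, hF, hFne, hμ, hlim⟩ := KB hX.2.1 hX.2.2 m hmp hmX
  have hμp := hμ.1
  have hpush : ∀ n, IsProbabilityMeasure ((m n).map (blockMap π)) := fun n =>
    Measure.isProbabilityMeasure_map (measurable_block π).aemeasurable
  have hpushμ : IsProbabilityMeasure (μ.map (blockMap π)) :=
    Measure.isProbabilityMeasure_map (measurable_block π).aemeasurable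
  have hGood : Good f μ := by
    intro l w hw
    have h1 := hlim 0 l w
    have h2 := avg_lim (fun n k => Q (m n) (0 + k) w) 1 0 l
      (fun n k => by rw [abs_of_nonneg (Q_nonneg _ _ _)]; exact Q_le_one _ _ _)
      (fun n k hk => by
        rw [zero_add]
        exact GoodAt_sub hf (hmg n) k l hk w hw)
    exact tendsto_nhds_unique h1 (h2.mono_left hF)
  refine ⟨μ, hμ, ?_, ?_⟩
  · refine ext_Q _ _ fun l v => ?_
    rw [Q_push]
    have h1 : Tendsto (fun n : ℕ => ∑ w : Fin l → A with π ∘ w = v,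
        (∑ k ∈ range (n + 1), Q (m n) (0 + k) w) / ((n : ℝ) + 1)) F
        (𝓝 (∑ w : Fin l → A with π ∘ w = v, Q μ 0 w)) :=
      tendsto_finsetSum _ fun w _ => hlim 0 l w
    have h2 := avg_lim (fun n k => Q ((m n).map (blockMap π)) k v) 1 (Q ν 0 v) l
      (fun n k => by rw [abs_of_nonneg (Q_nonneg _ _ _)]; exact Q_le_one _ _ _)
      (fun n k hk => by
        rw [Q_initial _ ν (n + 1) (hmQ n) k l hk, Q_shift ν hν.2.1])
    refine tendsto_nhds_unique h1 ((h2.mono_left hF).congr fun n => ?_)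
    rw [← Finset.sum_div, Finset.sum_comm]
    simp_rw [Q_push, zero_add]
  · rw [← EReal.ge_of_forall_gt_iff_ge]
    intro r hr
    rw [(eq_limit hXm hf hμ hGood).2 r]
    have hr' := ((eq_limit hYm (psi_GS π hf) hν hg).2 r).1 hr.le
    intro l
    set K : ℝ := ∑ p ∈ range (l + 1), ((Fintype.card A : ℝ) ^ p +
      ∑ w : Fin p → A, |Real.log (f (List.ofFn w))|) with hKdef
    have hK : ∀ n i p, p ≤ l → |Ud f (m n) i p + Hd (m n) i p| ≤ K := by
      intro n i p hp
      have h1 : (Fintype.card A : ℝ) ^ p + ∑ w : Fin p → A, |Real.log (f (List.ofFn w))| ≤ K :=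
        Finset.single_le_sum (f := fun p => (Fintype.card A : ℝ) ^ p +
          ∑ w : Fin p → A, |Real.log (f (List.ofFn w))|) (fun p _ => by positivity)
          (Finset.mem_range.2 (by omega))
      refine (abs_add_le _ _).trans ?_
      rw [abs_of_nonneg (Hd_nonneg (m n) i p)]
      linarith [Ud_abs_le f (m n) i p, Hd_le (m n) i p]
    have hE : Tendsto (fun n : ℕ => (∑ w : Fin l → A,
        (((∑ k ∈ range (n + 1), Q (m n) (0 + k) w) / ((n : ℝ) + 1)) * Real.log (f (List.ofFn w)) +
        Real.negMulLog ((∑ k ∈ range (n + 1), Q (m n) (0 + k) w) / ((n : ℝ) + 1)))) +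
        (C + (C + l * (3 * K + C) + l * C) * (1 / ((n : ℝ) + 1)))) F
        (𝓝 ((∑ w : Fin l → A, (Q μ 0 w * Real.log (f (List.ofFn w)) + Real.negMulLog (Q μ 0 w))) +
          (C + (C + l * (3 * K + C) + l * C) * 0))) := by
      refine Tendsto.add (tendsto_finsetSum _ fun w _ => ?_) ?_
      · exact ((hlim 0 l w).mul_const _).add
          ((Real.continuous_negMulLog.tendsto _).comp (hlim 0 l w))
      · exact tendsto_const_nhds.add
          (((tendsto_one_div_add_atTop_nhds_zero_nat (𝕜 := ℝ)).mono_left hF).const_mul _)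
    have hge : ∀ᶠ n in F, l * r ≤ (∑ w : Fin l → A,
        (((∑ k ∈ range (n + 1), Q (m n) (0 + k) w) / ((n : ℝ) + 1)) * Real.log (f (List.ofFn w)) +
        Real.negMulLog ((∑ k ∈ range (n + 1), Q (m n) (0 + k) w) / ((n : ℝ) + 1)))) +
        (C + (C + l * (3 * K + C) + l * C) * (1 / ((n : ℝ) + 1))) := by
      refine hF ?_
      filter_upwards [eventually_ge_atTop l] with n hn
      have h1 := avg_ineq hf (m n) n l (by omega) (hmg n) K (hK n)
      rw [hmE n] at h1
      have h2 := hr' (n + 1)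
      push_cast at h2
      have hn : (0:ℝ) < (n:ℝ) + 1 := by positivity
      have h3 := mul_le_mul_of_nonneg_left h2 (Nat.cast_nonneg l : (0:ℝ) ≤ l)
      set S := (∑ w : Fin l → A,
        (((∑ k ∈ range (n + 1), Q (m n) (0 + k) w) / ((n : ℝ) + 1)) * Real.log (f (List.ofFn w)) +
        Real.negMulLog ((∑ k ∈ range (n + 1), Q (m n) (0 + k) w) / ((n : ℝ) + 1))))
      have e : S + (C + (C + l * (3 * K + C) + l * C) * (1 / ((n : ℝ) + 1))) =
          (((n : ℝ) + 1) * S + ((n : ℝ) + 2) * C + l * (3 * K + C) + l * C) / ((n : ℝ) + 1) := by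
        field_simp; ring
      rw [e, le_div_iff₀ hn]
      linarith
    have := ge_of_tendsto hE hge
    rw [Finset.sum_add_distrib] at this
    unfold Ud Hd
    linarith

lemma Lang_sub {X : Set (ℕ → A)} (hXs : shiftMap '' X ⊆ X) (I J : List A) (h : Lang X (I ++ J)) :
    Lang X I ∧ Lang X J := by
  obtain ⟨n, u, rfl⟩ : ∃ n, ∃ v : Fin n → A, I = List.ofFn v := ⟨_, I.get, by simp⟩
  obtain ⟨k, v, rfl⟩ : ∃ n, ∃ v : Fin n → A, J = List.ofFn v := ⟨_, J.get, by simp⟩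
  obtain ⟨x, hx, hxX⟩ := h
  rw [← List.ofFn_fin_append, cyl_ofFn, blk_append] at hx
  refine ⟨⟨x, by rw [cyl_ofFn]; exact hx.1, hxX⟩, ⟨shiftMap^[n] x, ?_, ?_⟩⟩
  · rw [cyl_ofFn, Set.mem_preimage, shift_iter_blk]
    exact hx.2
  · clear hx
    induction n with
    | zero => exact hxX
    | succ n ih =>
      rw [Function.iterate_succ_apply']
      exact hXs ⟨_, ih (fun i => u i.castSucc), rfl⟩

lemma Lang_nil {X : Set (ℕ → A)} (h : X.Nonempty) : Lang X [] := by
  obtain ⟨x, hx⟩ := h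
  exact ⟨x, fun i => i.elim0, hx⟩

lemma Lang_blk {X : Set (ℕ → A)} {x : ℕ → A} (hx : x ∈ X) (n : ℕ) : Lang X (List.ofFn (blk 0 n x)) :=
  ⟨x, by rw [cyl_ofFn]; rfl, hx⟩

lemma ind_GS {X : Set (ℕ → A)} (hX : IsSubshift X) :
    GS (fun I => if Lang X I then (1:ℝ) else 0) 0 := by
  refine ⟨fun I => by split_ifs <;> norm_num, by simp [Lang_nil hX.1], le_rfl, fun I J => ?_⟩
  by_cases h : Lang X (I ++ J)
  · have := Lang_sub hX.2.2 I J h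
    simp [h, this.1, this.2]
  · simp only [h, if_false]
    split_ifs <;> simp

lemma ind_Good (π : A → B) {X : Set (ℕ → A)} {Y : Set (ℕ → B)} (hX : IsSubshift X)
    (hπ : blockMap π '' X = Y) (hYm : MeasurableSet Y) {ν : Measure (ℕ → B)} (hν : InvOn Y ν) :
    Good (psi π (fun I => if Lang X I then (1:ℝ) else 0)) ν := by
  intro n v hv
  have hνp := hν.1
  have hGS := ind_GS hX
  rw [psi_ofFn, Finset.sum_eq_zero_iff_of_nonneg (fun _ _ => hGS.nonneg _)] at hv
  unfold Q Measure.real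
  rw [← inter_full ν hYm hν.2.2]
  have : blk 0 n ⁻¹' {v} ∩ Y = ∅ := by
    rw [Set.eq_empty_iff_forall_notMem]
    rintro y ⟨hy, hyY⟩
    rw [← hπ] at hyY
    obtain ⟨x, hx, rfl⟩ := hyY
    have := hv (blk 0 n x) (by
      rw [Finset.mem_filter]; exact ⟨Finset.mem_univ _, hy⟩)
    simp [Lang_blk hx] at this
  rw [this]; simp

theorem rvp_lower (π : A → B) {X : Set (ℕ → A)} {Y : Set (ℕ → B)} (hX : IsSubshift X)
    (hπ : blockMap π '' X = Y)
    (hYm : MeasurableSet Y) {f : List A → ℝ} {C : ℝ} (hf : GS f C)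
    (hfX : ∀ I, f I ≠ 0 → Lang X I) {ν : Measure (ℕ → B)} (hν : InvOn Y ν) :
    ∃ μ, InvOn X μ ∧ μ.map (blockMap π) = ν ∧
      PhiStar ν (genPot (psi π f)) + (ent Y ν : ℝ) ≤ PhiStar μ (genPot f) + (ent X μ : ℝ) := by
  have hνp := hν.1
  by_cases hg : Good (psi π f) ν
  · exact rvp_lower_good π hX hYm hf hfX hν hg
  · obtain ⟨μ, h1, h2, -⟩ := rvp_lower_good π hX hYm (ind_GS hX)
      (fun I h => by by_contra h'; simp [h'] at h) hν (ind_Good π hX hπ hYm hν)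
    refine ⟨μ, h1, h2, ?_⟩
    rw [PhiStar_bad (psi_GS π hf) ν hg]; simp

end
end WES

open MeasureTheory Filter Topology
open scoped Classical ENNReal NNReal

set_option linter.unusedSectionVars false
set_option linter.unusedVariables false
namespace WES
open Finset (range)

section
variable {A : Type} [Fintype A] [TopologicalSpace A] [DiscreteTopology A] [MeasurableSpace A]
  [BorelSpace A]
variable {B : Type} [Fintype B] [TopologicalSpace B] [DiscreteTopology B] [MeasurableSpace B]
  [BorelSpace B]

/-- `μ` is the mixture of `μ₁`, `μ₂` -/
def Mix {Ω : Type*} [MeasurableSpace Ω] (t : ℝ) (μ μ₁ μ₂ : Measure Ω) : Prop :=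
  μ = ENNReal.ofReal t • μ₁ + ENNReal.ofReal (1 - t) • μ₂

lemma Mix.map {Ω Ω' : Type*} [MeasurableSpace Ω] [MeasurableSpace Ω'] {t : ℝ}
    {μ μ₁ μ₂ : Measure Ω} (h : Mix t μ μ₁ μ₂) {f : Ω → Ω'} (hf : Measurable f) :
    Mix t (μ.map f) (μ₁.map f) (μ₂.map f) := by
  unfold Mix at *
  rw [h, Measure.map_add _ _ hf, Measure.map_smul, Measure.map_smul]

lemma Mix.real {Ω : Type*} [MeasurableSpace Ω] {t : ℝ}
    {μ μ₁ μ₂ : Measure Ω} [IsProbabilityMeasure μ₁] [IsProbabilityMeasure μ₂]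
    (h : Mix t μ μ₁ μ₂) (h0 : 0 ≤ t) (h1 : t ≤ 1) (s : Set Ω) :
    μ.real s = t * μ₁.real s + (1 - t) * μ₂.real s := by
  unfold Mix at h
  unfold Measure.real
  rw [h, Measure.add_apply, Measure.smul_apply, Measure.smul_apply, smul_eq_mul, smul_eq_mul,
    ENNReal.toReal_add (ENNReal.mul_ne_top ENNReal.ofReal_ne_top (measure_ne_top _ _))
      (ENNReal.mul_ne_top ENNReal.ofReal_ne_top (measure_ne_top _ _)), ENNReal.toReal_mul,
    ENNReal.toReal_mul, ENNReal.toReal_ofReal h0, ENNReal.toReal_ofReal (by linarith)]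

lemma Mix.Q {t : ℝ} {μ μ₁ μ₂ : Measure (ℕ → A)} [IsProbabilityMeasure μ₁]
    [IsProbabilityMeasure μ₂] (h : Mix t μ μ₁ μ₂) (h0 : 0 ≤ t) (h1 : t ≤ 1) (i : ℕ) {n : ℕ}
    (w : Fin n → A) : Q μ i w = t * Q μ₁ i w + (1 - t) * Q μ₂ i w :=
  h.real h0 h1 _

lemma Mix.InvOn {X : Set (ℕ → A)} {t : ℝ} {μ μ₁ μ₂ : Measure (ℕ → A)} (h : Mix t μ μ₁ μ₂)
    (h0 : 0 ≤ t) (h1 : t ≤ 1) (H1 : InvOn X μ₁) (H2 : InvOn X μ₂) : InvOn X μ := by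
  have e : ENNReal.ofReal t + ENNReal.ofReal (1 - t) = 1 := by
    rw [← ENNReal.ofReal_add h0 (by linarith)]; simp
  have hp1 := H1.1
  have hp2 := H2.1
  have hs := h.map measurable_shift
  unfold Mix at h hs
  refine ⟨⟨?_⟩, ?_, ?_⟩
  · rw [h]; simp [e]
  · rw [hs, H1.2.1, H2.2.1, ← h]
  · rw [h]; simp [H1.2.2, H2.2.2, e]

lemma negMulLog_add_le {x y : ℝ} (hx : 0 ≤ x) (hy : 0 ≤ y) :
    Real.negMulLog (x + y) ≤ Real.negMulLog x + Real.negMulLog y := by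
  rcases hx.eq_or_lt with rfl | hx
  · simp
  rcases hy.eq_or_lt with rfl | hy
  · simp
  unfold Real.negMulLog
  have h1 := Real.log_le_log hx (by linarith : x ≤ x + y)
  have h2 := Real.log_le_log hy (by linarith : y ≤ x + y)
  nlinarith

lemma Hd_mix {t : ℝ} {μ μ₁ μ₂ : Measure (ℕ → A)} [IsProbabilityMeasure μ₁]
    [IsProbabilityMeasure μ₂] (h : Mix t μ μ₁ μ₂) (h0 : 0 ≤ t) (h1 : t ≤ 1) (n : ℕ) :
    t * Hd μ₁ 0 n + (1 - t) * Hd μ₂ 0 n ≤ Hd μ 0 n ∧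
    Hd μ 0 n ≤ t * Hd μ₁ 0 n + (1 - t) * Hd μ₂ 0 n + (Real.negMulLog t + Real.negMulLog (1 - t)) := by
  unfold Hd
  constructor
  · rw [Finset.mul_sum, Finset.mul_sum, ← Finset.sum_add_distrib]
    refine Finset.sum_le_sum fun w _ => ?_
    rw [h.Q h0 h1]
    have := Real.concaveOn_negMulLog.2 (x := Q μ₁ 0 w) (y := Q μ₂ 0 w) (Q_nonneg _ _ _)
      (Q_nonneg _ _ _) h0 (by linarith : 0 ≤ 1 - t) (by ring)
    simpa using this
  · have : Real.negMulLog t + Real.negMulLog (1 - t) =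
        ∑ w : Fin n → A, (Q μ₁ 0 w * Real.negMulLog t + Q μ₂ 0 w * Real.negMulLog (1 - t)) := by
      rw [Finset.sum_add_distrib, ← Finset.sum_mul, ← Finset.sum_mul, sum_Q, sum_Q]; ring
    rw [this, Finset.mul_sum, Finset.mul_sum, ← Finset.sum_add_distrib, ← Finset.sum_add_distrib]
    refine Finset.sum_le_sum fun w _ => ?_
    rw [h.Q h0 h1]
    refine (negMulLog_add_le (mul_nonneg h0 (Q_nonneg _ _ _))
      (mul_nonneg (by linarith) (Q_nonneg _ _ _))).trans ?_
    rw [Real.negMulLog_mul, Real.negMulLog_mul]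
    linarith

lemma ent_mix {X : Set (ℕ → A)} (hXm : MeasurableSet X) {t : ℝ} {μ μ₁ μ₂ : Measure (ℕ → A)}
    (h : Mix t μ μ₁ μ₂) (h0 : 0 ≤ t) (h1 : t ≤ 1) (H1 : InvOn X μ₁) (H2 : InvOn X μ₂) :
    ent X μ = t * ent X μ₁ + (1 - t) * ent X μ₂ := by
  have hp1 := H1.1
  have hp2 := H2.1
  have T := ent_tendsto hXm (h.InvOn h0 h1 H1 H2)
  have T1 := ((ent_tendsto hXm H1).const_mul t).add ((ent_tendsto hXm H2).const_mul (1 - t))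
  have hc : Tendsto (fun n : ℕ => (Real.negMulLog t + Real.negMulLog (1 - t)) / (n:ℝ)) atTop (𝓝 0) :=
    tendsto_const_div_atTop_nhds_zero_nat _
  have T2 := T1.add hc
  rw [add_zero] at T2
  refine le_antisymm (le_of_tendsto_of_tendsto' T T2 fun n => ?_)
    (le_of_tendsto_of_tendsto' T1 T fun n => ?_)
  · rw [← mul_div_assoc, ← mul_div_assoc, ← add_div, ← add_div]
    exact div_le_div_of_nonneg_right (Hd_mix h h0 h1 n).2 (Nat.cast_nonneg n)
  · rw [← mul_div_assoc, ← mul_div_assoc, ← add_div]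
    exact div_le_div_of_nonneg_right (Hd_mix h h0 h1 n).1 (Nat.cast_nonneg n)

lemma Good_mix {f : List A → ℝ} {t : ℝ} {μ μ₁ μ₂ : Measure (ℕ → A)} [IsProbabilityMeasure μ₁]
    [IsProbabilityMeasure μ₂] (h : Mix t μ μ₁ μ₂) (h0 : 0 < t) (h1 : t < 1) :
    Good f μ ↔ Good f μ₁ ∧ Good f μ₂ := by
  have key : ∀ n (w : Fin n → A), Q μ 0 w = 0 ↔ Q μ₁ 0 w = 0 ∧ Q μ₂ 0 w = 0 := by
    intro n w
    rw [h.Q h0.le h1.le]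
    have q1 := Q_nonneg μ₁ 0 w
    have q2 := Q_nonneg μ₂ 0 w
    rw [add_eq_zero_iff_of_nonneg (mul_nonneg h0.le q1) (mul_nonneg (by linarith) q2),
      mul_eq_zero, mul_eq_zero]
    have : 1 - t ≠ 0 := by linarith
    simp [h0.ne', this]
  unfold Good GoodAt
  simp_rw [key]
  grind

lemma PhiStar_mix {f : List A → ℝ} {C : ℝ} (hf : GS f C) {X : Set (ℕ → A)} {t : ℝ}
    {μ μ₁ μ₂ : Measure (ℕ → A)} (h : Mix t μ μ₁ μ₂) (h0 : 0 < t) (h1 : t < 1)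
    (H1 : InvOn X μ₁) (H2 : InvOn X μ₂) :
    PhiStar μ (genPot f) = (t : EReal) * PhiStar μ₁ (genPot f) +
      ((1 - t : ℝ) : EReal) * PhiStar μ₂ (genPot f) := by
  have H := h.InvOn h0.le h1.le H1 H2
  have hp := H.1
  have hp1 := H1.1
  have hp2 := H2.1
  have h1t : 0 < 1 - t := by linarith
  have n1 := PhiStar_ne_top hf μ₁ H1.2.1
  have n2 := PhiStar_ne_top hf μ₂ H2.2.1
  have m1 : (t : EReal) * PhiStar μ₁ (genPot f) ≠ ⊤ := by
    generalize PhiStar μ₁ (genPot f) = e at *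
    induction e with
    | bot => rw [EReal.coe_mul_bot_of_pos h0]; simp
    | coe x => rw [← EReal.coe_mul]; exact EReal.coe_ne_top _
    | top => exact absurd rfl n1
  have m2 : ((1 - t : ℝ) : EReal) * PhiStar μ₂ (genPot f) ≠ ⊤ := by
    generalize PhiStar μ₂ (genPot f) = e at *
    induction e with
    | bot => rw [EReal.coe_mul_bot_of_pos h1t]; simp
    | coe x => rw [← EReal.coe_mul]; exact EReal.coe_ne_top _
    | top => exact absurd rfl n2
  by_cases hg : Good f μ
  · obtain ⟨g1, g2⟩ := (Good_mix h h0 h1).1 hg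
    have T := (PhiStar_good hf μ H.2.1 hg).2
    have T1 : Tendsto (fun n : ℕ => (t : EReal) * ((Ud f μ₁ 0 n / n : ℝ) : EReal)) atTop
        (𝓝 ((t : EReal) * PhiStar μ₁ (genPot f))) :=
      EReal.Tendsto.const_mul (PhiStar_good hf μ₁ H1.2.1 g1).2 (Or.inl (by simp)) (Or.inl (by simp))
    have T2 : Tendsto (fun n : ℕ => ((1 - t : ℝ) : EReal) * ((Ud f μ₂ 0 n / n : ℝ) : EReal)) atTop
        (𝓝 (((1 - t : ℝ) : EReal) * PhiStar μ₂ (genPot f))) :=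
      EReal.Tendsto.const_mul (PhiStar_good hf μ₂ H2.2.1 g2).2
        (Or.inl (EReal.coe_ne_bot _)) (Or.inl (EReal.coe_ne_top _))
    have T3 := (EReal.continuousAt_add (p := ((t : EReal) * PhiStar μ₁ (genPot f),
      ((1 - t : ℝ) : EReal) * PhiStar μ₂ (genPot f))) (Or.inl m1) (Or.inr m2)).tendsto.comp
      (T1.prodMk_nhds T2)
    refine tendsto_nhds_unique T (T3.congr fun n => ?_)
    simp only [Function.comp]
    rw [← EReal.coe_mul, ← EReal.coe_mul, ← EReal.coe_add]
    congr 1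
    have : Ud f μ 0 n = t * Ud f μ₁ 0 n + (1 - t) * Ud f μ₂ 0 n := by
      unfold Ud
      rw [Finset.mul_sum, Finset.mul_sum, ← Finset.sum_add_distrib]
      refine Finset.sum_congr rfl fun w _ => ?_
      rw [h.Q h0.le h1.le]; ring
    rw [this]; ring
  · rw [PhiStar_bad hf μ hg]
    rw [Good_mix h h0 h1, not_and_or] at hg
    rcases hg with hg | hg
    · rw [PhiStar_bad hf μ₁ hg, EReal.coe_mul_bot_of_pos h0, EReal.bot_add]
    · rw [PhiStar_bad hf μ₂ hg, EReal.coe_mul_bot_of_pos h1t, EReal.add_bot]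

lemma MInv_iff {X : Set (ℕ → A)} (μ : ProbabilityMeasure (ℕ → A)) :
    μ ∈ MInv X ↔ InvOn X (μ : Measure (ℕ → A)) :=
  ⟨fun h => ⟨inferInstance, h.1, h.2⟩, fun h => ⟨h.2.1, h.2.2⟩⟩

section V
variable {X : Set (ℕ → A)} {Y : Set (ℕ → B)} {π : A → B} {f : List A → ℝ} {C a₁ a₂ : ℝ}

lemma wVal_ne_top (hf : GS f C) {μ : ProbabilityMeasure (ℕ → A)} (hμ : μ ∈ MInv X) :
    wVal2 X Y π (genPot f) a₁ a₂ μ ≠ ⊤ := by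
  have := PhiStar_ne_top hf μ hμ.1
  unfold wVal2
  generalize PhiStar (μ : Measure (ℕ → A)) (genPot f) = e at *
  induction e with
  | bot => simp
  | coe x => rw [← EReal.coe_add]; exact EReal.coe_ne_top _
  | top => exact absurd rfl this

lemma wVal_mix (hf : GS f C) (hXm : MeasurableSet X) (hYm : MeasurableSet Y)
    (hπ : blockMap π '' X = Y) {t : ℝ}
    {μ μ₁ μ₂ : ProbabilityMeasure (ℕ → A)}
    (h : Mix t (μ : Measure (ℕ → A)) μ₁ μ₂) (h0 : 0 < t) (h1 : t < 1)
    (H1 : μ₁ ∈ MInv X) (H2 : μ₂ ∈ MInv X) :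
    wVal2 X Y π (genPot f) a₁ a₂ μ = (t : EReal) * wVal2 X Y π (genPot f) a₁ a₂ μ₁ +
      ((1 - t : ℝ) : EReal) * wVal2 X Y π (genPot f) a₁ a₂ μ₂ := by
  rw [MInv_iff] at H1 H2
  have hp1 := PhiStar_ne_top hf μ₁ H1.2.1
  have hp2 := PhiStar_ne_top hf μ₂ H2.2.1
  have h1t : 0 < 1 - t := by linarith
  unfold wVal2 pushM
  rw [PhiStar_mix hf h h0 h1 H1 H2, ent_mix hXm h h0.le h1.le H1 H2,
    ent_mix hYm (h.map (measurable_block π)) h0.le h1.le (InvOn_push π hπ hYm H1)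
      (InvOn_push π hπ hYm H2)]
  generalize PhiStar (μ₁ : Measure (ℕ → A)) (genPot f) = e1 at *
  generalize PhiStar (μ₂ : Measure (ℕ → A)) (genPot f) = e2 at *
  induction e1 with
  | bot => simp only [EReal.bot_add, EReal.coe_mul_bot_of_pos h0]
  | top => exact absurd rfl hp1
  | coe x =>
    induction e2 with
    | bot => simp only [EReal.bot_add, EReal.coe_mul_bot_of_pos h1t, EReal.add_bot]
    | top => exact absurd rfl hp2
    | coe y =>
      norm_cast
      ring

lemma wVal_char (hf : GS f C) (hXm : MeasurableSet X) (hYm : MeasurableSet Y)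
    (hπ : blockMap π '' X = Y) (ha₁ : 0 ≤ a₁) (ha₂ : 0 ≤ a₂) {μ : ProbabilityMeasure (ℕ → A)}
    (hμ : μ ∈ MInv X) (r : ℝ) :
    (r : EReal) ≤ wVal2 X Y π (genPot f) a₁ a₂ μ ↔ Good f (μ : Measure (ℕ → A)) ∧
      ∀ n : ℕ, n * r ≤ Ud f (μ : Measure (ℕ → A)) 0 n + (a₁ * Hd (μ : Measure (ℕ → A)) 0 n +
        a₂ * Hd ((μ : Measure (ℕ → A)).map (blockMap π)) 0 n) + C := by
  rw [MInv_iff] at hμ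
  by_cases hg : Good f (μ : Measure (ℕ → A))
  · unfold wVal2 pushM
    have hP := InvOn_push π hπ hYm hμ
    obtain ⟨m, hm⟩ : ∃ m : Measure (ℕ → A), m = (μ : Measure (ℕ → A)) := ⟨_, rfl⟩
    rw [← hm] at hμ hg hP ⊢
    obtain ⟨p, hp⟩ : ∃ p : Measure (ℕ → B), p = m.map (blockMap π) := ⟨_, rfl⟩
    rw [← hp] at hP ⊢
    have hmp := hμ.1
    have hPp := hP.1
    have hlim : Tendsto (fun n : ℕ => (a₁ * Hd m 0 n + a₂ * Hd p 0 n) / n) atTop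
        (𝓝 (a₁ * ent X m + a₂ * ent Y p)) := by
      have t1 := (ent_tendsto hXm hμ).const_mul a₁
      have t2 := (ent_tendsto hYm hP).const_mul a₂
      refine (t1.add t2).congr fun n => ?_
      ring
    have hsub : ∀ n k : ℕ, Ud f m 0 (n + k) + (a₁ * Hd m 0 (n + k) + a₂ * Hd p 0 (n + k)) ≤
        (Ud f m 0 n + (a₁ * Hd m 0 n + a₂ * Hd p 0 n)) +
        (Ud f m 0 k + (a₁ * Hd m 0 k + a₂ * Hd p 0 k)) + C := by
      intro n k
      have e1 := Ud_subadd hf m hμ.2.1 hg n k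
      have e2 := mul_le_mul_of_nonneg_left (Hd_subadd m hμ.2.1 n k) ha₁
      have e3 := mul_le_mul_of_nonneg_left (Hd_subadd p hP.2.1 n k) ha₂
      linarith
    have hpg := PhiStar_good hf m hμ.2.1 hg
    have := (comb (fun n => Ud f m 0 n)
      (fun n => a₁ * Hd m 0 n + a₂ * Hd p 0 n)
      (PhiStar m (genPot f)) (a₁ * ent X m + a₂ * ent Y p) C
      hpg.1 hpg.2 hlim hsub).2 r
    rw [this]
    exact ⟨fun h => ⟨hg, h⟩, fun h => h.2⟩
  · unfold wVal2
    rw [PhiStar_bad hf _ hg]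
    simp [hg]

lemma isClosed_MInv (hXc : IsCompact X) : IsClosed (MInv X) := by
  have h1 : IsClosed {μ : ProbabilityMeasure (ℕ → A) |
      (μ : Measure (ℕ → A)).map shiftMap = (μ : Measure (ℕ → A))} := by
    have : {μ : ProbabilityMeasure (ℕ → A) |
        (μ : Measure (ℕ → A)).map shiftMap = (μ : Measure (ℕ → A))} =
        ⋂ n : ℕ, ⋂ w : Fin n → A, {μ : ProbabilityMeasure (ℕ → A) |
          Q (μ : Measure (ℕ → A)) 1 w = Q (μ : Measure (ℕ → A)) 0 w} := by
      ext μ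
      simp only [Set.mem_ofPred_eq, Set.mem_iInter]
      constructor
      · intro h n w
        exact Q_shift _ h 1 w
      · intro h
        have : IsProbabilityMeasure ((μ : Measure (ℕ → A)).map shiftMap) :=
          Measure.isProbabilityMeasure_map measurable_shift.aemeasurable
        refine ext_Q _ _ fun n w => ?_
        rw [Q_map_shift]; exact h n w
    rw [this]
    exact isClosed_iInter fun n => isClosed_iInter fun w =>
      isClosed_eq (continuous_Q 1 w) (continuous_Q 0 w)
  have h2 : IsClosed {μ : ProbabilityMeasure (ℕ → A) | (μ : Measure (ℕ → A)) X = 1} := by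
    rw [isClosed_iff_ultrafilter]
    intro μ u hu hs
    refine le_antisymm prob_le_one ?_
    have := ProbabilityMeasure.limsup_measure_closed_le_of_tendsto (L := (u : Filter _))
      (μs := id) (μ := μ) (tendsto_id'.2 hu) hXc.isClosed
    refine le_trans ?_ this
    have h3 : (fun ν : ProbabilityMeasure (ℕ → A) => (ν : Measure (ℕ → A)) X) =ᶠ[u]
        fun _ => (1:ℝ≥0∞) := hs
    rw [show (fun i : ProbabilityMeasure (ℕ → A) => ((id i : ProbabilityMeasure (ℕ → A)) :
      Measure (ℕ → A)) X) = fun ν : ProbabilityMeasure (ℕ → A) => (ν : Measure (ℕ → A)) X from rfl,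
      limsup_congr h3, limsup_const]
  exact h1.inter h2

lemma isCompact_MInv (hXc : IsCompact X) : IsCompact (MInv X) := (isClosed_MInv hXc).isCompact

lemma MInv_nonempty (hX : IsSubshift X) : (MInv X).Nonempty := by
  obtain ⟨x, hx⟩ := hX.1
  obtain ⟨F, μ, -, -, h, -⟩ := KB hX.2.1 hX.2.2 (fun _ => Measure.dirac x)
    (fun _ => inferInstance) (fun _ => by simp [hx])
  exact ⟨⟨μ, h.1⟩, h.2.1, h.2.2⟩

lemma isClosed_level (hf : GS f C) (hXc : IsCompact X) (hYm : MeasurableSet Y)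
    (hπ : blockMap π '' X = Y) (ha₁ : 0 ≤ a₁) (ha₂ : 0 ≤ a₂) (r : ℝ) :
    IsClosed {μ | μ ∈ MInv X ∧ (r : EReal) ≤ wVal2 X Y π (genPot f) a₁ a₂ μ} := by
  have hXm : MeasurableSet X := hXc.isClosed.measurableSet
  have : {μ | μ ∈ MInv X ∧ (r : EReal) ≤ wVal2 X Y π (genPot f) a₁ a₂ μ} =
      MInv X ∩ ((⋂ n : ℕ, ⋂ w : Fin n → A, ⋂ _ : f (List.ofFn w) = 0,
        {μ : ProbabilityMeasure (ℕ → A) | Q (μ : Measure (ℕ → A)) 0 w = 0}) ∩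
      ⋂ n : ℕ, {μ : ProbabilityMeasure (ℕ → A) |
        n * r ≤ Ud f (μ : Measure (ℕ → A)) 0 n + (a₁ * Hd (μ : Measure (ℕ → A)) 0 n +
        a₂ * Hd ((μ : Measure (ℕ → A)).map (blockMap π)) 0 n) + C}) := by
    ext μ
    simp only [Set.mem_ofPred_eq, Set.mem_inter_iff, Set.mem_iInter]
    refine and_congr_right fun hμ => ?_
    rw [wVal_char hf hXm hYm hπ ha₁ ha₂ hμ r]
    rfl
  rw [this]
  refine (isClosed_MInv hXc).inter (IsClosed.inter ?_ ?_)
  · exact isClosed_iInter fun n => isClosed_iInter fun w => isClosed_iInter fun _ =>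
      isClosed_eq (continuous_Q 0 w) continuous_const
  · refine isClosed_iInter fun n => isClosed_le continuous_const ?_
    have cH : Continuous fun μ : ProbabilityMeasure (ℕ → A) => Hd (μ : Measure (ℕ → A)) 0 n := by
      unfold Hd
      exact continuous_finsetSum _ fun w _ => Real.continuous_negMulLog.comp (continuous_Q 0 w)
    have cU : Continuous fun μ : ProbabilityMeasure (ℕ → A) => Ud f (μ : Measure (ℕ → A)) 0 n := by
      unfold Ud
      exact continuous_finsetSum _ fun w _ => (continuous_Q 0 w).mul continuous_const
    have cP : Continuous fun μ : ProbabilityMeasure (ℕ → A) =>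
        Hd ((μ : Measure (ℕ → A)).map (blockMap π)) 0 n := by
      unfold Hd
      simp_rw [Q_push]
      exact continuous_finsetSum _ fun v _ => Real.continuous_negMulLog.comp
        (continuous_finsetSum _ fun w _ => continuous_Q 0 w)
    exact (cU.add ((cH.const_mul _).add (cP.const_mul _))).add continuous_const

lemma WEq_iff {μ : ProbabilityMeasure (ℕ → A)} {F : ℕ → (ℕ → A) → ℝ} :
    μ ∈ WEqSet2 X Y π F a₁ a₂ ↔ μ ∈ MInv X ∧ ∀ η ∈ MInv X,
      wVal2 X Y π F a₁ a₂ η ≤ wVal2 X Y π F a₁ a₂ μ := by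
  unfold WEqSet2
  rw [Set.mem_ofPred_eq]
  refine and_congr_right fun hμ => ⟨fun h η hη => ?_, fun h => ?_⟩
  · rw [h]; exact le_iSup₂ (f := fun η _ => wVal2 X Y π F a₁ a₂ η) η hη
  · exact le_antisymm (le_iSup₂ (f := fun η _ => wVal2 X Y π F a₁ a₂ η) μ hμ)
      (iSup₂_le h)

lemma WEq_nonempty (hf : GS f C) (hX : IsSubshift X) (hYm : MeasurableSet Y)
    (hπ : blockMap π '' X = Y) (ha₁ : 0 ≤ a₁) (ha₂ : 0 ≤ a₂) :
    (WEqSet2 X Y π (genPot f) a₁ a₂).Nonempty := by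
  have husc : UpperSemicontinuousOn (wVal2 X Y π (genPot f) a₁ a₂) (MInv X) := by
    intro μ hμ y hy
    obtain ⟨r, hr1, hr2⟩ := EReal.lt_iff_exists_real_btwn.1 hy
    have h1 := (isClosed_level hf hX.2.1 hYm hπ ha₁ ha₂ r).isOpen_compl.mem_nhds
      (x := μ) (fun h => absurd h.2 (not_le.2 hr1))
    filter_upwards [mem_nhdsWithin_of_mem_nhds h1, self_mem_nhdsWithin] with η h2 h3
    by_contra h4
    exact h2 ⟨h3, hr2.le.trans (not_lt.1 h4)⟩
  obtain ⟨μ, hμ, hmax⟩ := husc.exists_isMaxOn (MInv_nonempty hX) (isCompact_MInv hX.2.1)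
  exact ⟨μ, WEq_iff.2 ⟨hμ, fun η hη => hmax hη⟩⟩

lemma WEq_compact (hf : GS f C) (hX : IsSubshift X) (hYm : MeasurableSet Y)
    (hπ : blockMap π '' X = Y) (ha₁ : 0 ≤ a₁) (ha₂ : 0 ≤ a₂) :
    IsCompact (WEqSet2 X Y π (genPot f) a₁ a₂) := by
  refine IsClosed.isCompact ?_
  obtain ⟨μ₀, h0⟩ := WEq_nonempty hf hX hYm hπ ha₁ ha₂
  rw [WEq_iff] at h0
  have : WEqSet2 X Y π (genPot f) a₁ a₂ = MInv X ∩ ⋂ r : ℝ,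
      ⋂ _ : (r : EReal) < wVal2 X Y π (genPot f) a₁ a₂ μ₀,
      {μ | μ ∈ MInv X ∧ (r : EReal) ≤ wVal2 X Y π (genPot f) a₁ a₂ μ} := by
    ext μ
    rw [WEq_iff, Set.mem_inter_iff]
    refine and_congr_right fun hμ => ?_
    simp only [Set.mem_iInter, Set.mem_ofPred_eq]
    constructor
    · intro h r hr
      exact ⟨hμ, hr.le.trans (h _ h0.1)⟩
    · intro h η hη
      refine (h0.2 η hη).trans ?_
      rw [← EReal.ge_of_forall_gt_iff_ge]
      exact fun r hr => (h r hr).2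
  rw [this]
  exact (isClosed_MInv hX.2.1).inter (isClosed_iInter fun r => isClosed_iInter fun _ =>
    isClosed_level hf hX.2.1 hYm hπ ha₁ ha₂ r)

lemma ereal_convex (t : ℝ) (h0 : 0 < t) (h1 : t < 1) (s : EReal) :
    (t : EReal) * s + ((1 - t : ℝ) : EReal) * s = s := by
  have h1t : 0 < 1 - t := by linarith
  induction s with
  | bot => rw [EReal.coe_mul_bot_of_pos h0, EReal.bot_add]
  | top => rw [EReal.coe_mul_top_of_pos h0, EReal.coe_mul_top_of_pos h1t]; rfl
  | coe x => norm_cast; ring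

lemma ereal_extreme (t : ℝ) (h0 : 0 < t) (h1 : t < 1) (s x y : EReal) (hs : s ≠ ⊤)
    (h : s = (t : EReal) * x + ((1 - t : ℝ) : EReal) * y) (hx : x ≤ s) (hy : y ≤ s) :
    x = s ∧ y = s := by
  have h1t : 0 < 1 - t := by linarith
  induction s with
  | bot => exact ⟨le_bot_iff.1 hx, le_bot_iff.1 hy⟩
  | top => exact absurd rfl hs
  | coe s =>
    induction x with
    | top => simp at hx
    | bot => rw [EReal.coe_mul_bot_of_pos h0, EReal.bot_add] at h; simp at h
    | coe x =>
      induction y with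
      | top => simp at hy
      | bot => rw [EReal.coe_mul_bot_of_pos h1t, EReal.add_bot] at h; simp at h
      | coe y =>
        norm_cast at *
        constructor <;> nlinarith

lemma WEq_convex (hf : GS f C) (hX : IsSubshift X) (hYm : MeasurableSet Y)
    (hπ : blockMap π '' X = Y) : ConvexPM (WEqSet2 X Y π (genPot f) a₁ a₂) := by
  have hXm : MeasurableSet X := hX.2.1.isClosed.measurableSet
  intro μ₁ H1 μ₂ H2 t h0 h1 μ hμ
  rcases h0.eq_or_lt with rfl | h0
  · have : μ = μ₂ := Subtype.ext (by simpa using hμ)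
    rwa [this]
  rcases h1.eq_or_lt with rfl | h1
  · have : μ = μ₁ := Subtype.ext (by simpa using hμ)
    rwa [this]
  rw [WEq_iff] at *
  have hm : Mix t (μ : Measure (ℕ → A)) μ₁ μ₂ := hμ
  have e : wVal2 X Y π (genPot f) a₁ a₂ μ₁ = wVal2 X Y π (genPot f) a₁ a₂ μ₂ :=
    le_antisymm (H2.2 _ H1.1) (H1.2 _ H2.1)
  have := wVal_mix (a₁ := a₁) (a₂ := a₂) hf hXm hYm hπ hm h0 h1 H1.1 H2.1
  rw [e, ereal_convex t h0 h1] at this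
  refine ⟨?_, fun η hη => ?_⟩
  · rw [MInv_iff]
    exact hm.InvOn h0.le h1.le ((MInv_iff _).1 H1.1) ((MInv_iff _).1 H2.1)
  · rw [this]; exact H2.2 η hη

lemma cond_InvOn (hXm : MeasurableSet X) {μ : Measure (ℕ → A)} (hμ : InvOn X μ) {s : Set (ℕ → A)}
    (hs : MeasurableSet s) (hinv : shiftMap ⁻¹' s = s) (h : μ s ≠ 0) :
    InvOn X (ProbabilityTheory.cond μ s) := by
  have hp := hμ.1
  have hp' := ProbabilityTheory.cond_isProbabilityMeasure (μ := μ) h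
  refine ⟨hp', ?_, ?_⟩
  · refine Measure.ext fun u hu => ?_
    rw [Measure.map_apply measurable_shift hu, ProbabilityTheory.cond_apply hs,
      ProbabilityTheory.cond_apply hs]
    congr 1
    conv_rhs => rw [← hμ.2.1, Measure.map_apply measurable_shift (hs.inter hu)]
    rw [Set.preimage_inter, hinv]
  · rw [ProbabilityTheory.cond_apply hs, inter_full μ hXm hμ.2.2,
      ENNReal.inv_mul_cancel h (measure_ne_top _ _)]

lemma WEq_extreme (hf : GS f C) (hX : IsSubshift X) (hYm : MeasurableSet Y)
    (hπ : blockMap π '' X = Y) (μ : ProbabilityMeasure (ℕ → A))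
    (hμ : IsExtremePM (WEqSet2 X Y π (genPot f) a₁ a₂) μ) :
    Ergodic shiftMap (μ : Measure (ℕ → A)) := by
  have hXm : MeasurableSet X := hX.2.1.isClosed.measurableSet
  obtain ⟨hμW, hext⟩ := hμ
  have hW := WEq_iff.1 hμW
  have hI := (MInv_iff _).1 hW.1
  refine ⟨⟨measurable_shift, hW.1.1⟩, ⟨fun s hs hinv => ?_⟩⟩
  by_contra hcon
  rw [eventuallyConst_set', not_or] at hcon
  have hs0 : (μ : Measure (ℕ → A)) s ≠ 0 := fun h => hcon.1 (ae_eq_empty.2 h)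
  have hs1 : (μ : Measure (ℕ → A)) sᶜ ≠ 0 := fun h => hcon.2 (ae_eq_univ.2 h)
  have I1 := cond_InvOn hXm hI hs hinv hs0
  have I2 := cond_InvOn hXm hI hs.compl (by rw [Set.preimage_compl, hinv]) hs1
  let μ₁ : ProbabilityMeasure (ℕ → A) := ⟨_, I1.1⟩
  let μ₂ : ProbabilityMeasure (ℕ → A) := ⟨_, I2.1⟩
  set t := (μ : Measure (ℕ → A)).real s with ht
  have h1t : 1 - t = (μ : Measure (ℕ → A)).real sᶜ := by
    rw [ht, probReal_compl_eq_one_sub hs]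
  have t0 : 0 < t := ENNReal.toReal_pos hs0 (measure_ne_top _ _)
  have t1 : 0 < 1 - t := by rw [h1t]; exact ENNReal.toReal_pos hs1 (measure_ne_top _ _)
  have hm : Mix t (μ : Measure (ℕ → A)) μ₁ μ₂ := by
    unfold Mix
    rw [h1t, ht]
    refine Measure.ext fun u hu => ?_
    have e1 : (μ₁ : Measure (ℕ → A)) u = ((μ : Measure (ℕ → A)) s)⁻¹ *
      (μ : Measure (ℕ → A)) (s ∩ u) := ProbabilityTheory.cond_apply hs _ u
    have e2 : (μ₂ : Measure (ℕ → A)) u = ((μ : Measure (ℕ → A)) sᶜ)⁻¹ *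
      (μ : Measure (ℕ → A)) (sᶜ ∩ u) := ProbabilityTheory.cond_apply hs.compl _ u
    rw [Measure.add_apply, Measure.smul_apply, Measure.smul_apply, smul_eq_mul, smul_eq_mul,
      e1, e2, Measure.real, Measure.real, ENNReal.ofReal_toReal (measure_ne_top _ _),
      ENNReal.ofReal_toReal (measure_ne_top _ _), ← mul_assoc, ← mul_assoc,
      ENNReal.mul_inv_cancel hs0 (measure_ne_top _ _),
      ENNReal.mul_inv_cancel hs1 (measure_ne_top _ _), one_mul, one_mul,
      Set.inter_comm s, Set.inter_comm sᶜ, ← Set.sdiff_eq, measure_inter_add_sdiff _ hs]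
  have m1 : μ₁ ∈ MInv X := (MInv_iff _).2 I1
  have m2 : μ₂ ∈ MInv X := (MInv_iff _).2 I2
  have hv := wVal_mix (a₁ := a₁) (a₂ := a₂) hf hXm hYm hπ hm t0 (by linarith) m1 m2
  obtain ⟨v1, v2⟩ := ereal_extreme t t0 (by linarith) _ _ _ (wVal_ne_top hf hW.1) hv
    (hW.2 _ m1) (hW.2 _ m2)
  have W1 : μ₁ ∈ WEqSet2 X Y π (genPot f) a₁ a₂ := WEq_iff.2 ⟨m1, by rw [v1]; exact hW.2⟩
  have W2 : μ₂ ∈ WEqSet2 X Y π (genPot f) a₁ a₂ := WEq_iff.2 ⟨m2, by rw [v2]; exact hW.2⟩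
  have heq := hext μ₁ W1 μ₂ W2 t t0 (by linarith) hm
  have e1 : (μ₁ : Measure (ℕ → A)) s = 1 := by
    have : (μ₁ : Measure (ℕ → A)) s = ((μ : Measure (ℕ → A)) s)⁻¹ *
      (μ : Measure (ℕ → A)) (s ∩ s) := ProbabilityTheory.cond_apply hs _ s
    rw [this, Set.inter_self, ENNReal.inv_mul_cancel hs0 (measure_ne_top _ _)]
  have e2 : (μ₂ : Measure (ℕ → A)) s = 0 := by
    have : (μ₂ : Measure (ℕ → A)) s = ((μ : Measure (ℕ → A)) sᶜ)⁻¹ *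
      (μ : Measure (ℕ → A)) (sᶜ ∩ s) := ProbabilityTheory.cond_apply hs.compl _ s
    rw [this]; simp
  rw [heq, e2] at e1
  exact zero_ne_one e1

end V

end
end WES

open MeasureTheory Filter Topology
open scoped Classical ENNReal NNReal
set_option linter.unusedSectionVars false
set_option linter.unusedVariables false
namespace WES
open Finset (range)

section KM
variable {A : Type} [Fintype A] [TopologicalSpace A] [DiscreteTopology A] [MeasurableSpace A]
  [BorelSpace A]

/-- coordinates of a measure -/
noncomputable def emb (μ : ProbabilityMeasure (ℕ → A)) : (Σ n, Fin n → A) → ℝ :=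
  fun p => Q (μ : Measure (ℕ → A)) 0 p.2

lemma emb_inj : Function.Injective (emb (A := A)) := by
  intro μ ν h
  have : (μ : Measure (ℕ → A)) = (ν : Measure (ℕ → A)) :=
    ext_Q _ _ fun n w => congrFun h ⟨n, w⟩
  exact Subtype.ext this

lemma emb_cont : Continuous (emb (A := A)) :=
  continuous_pi fun p => continuous_Q 0 p.2

lemma km_single (S : Set (ProbabilityMeasure (ℕ → A))) (hc : IsCompact S) (hconv : ConvexPM S)
    (hne : S.Nonempty) (η : ProbabilityMeasure (ℕ → A)) (hext : ∀ μ, IsExtremePM S μ → μ = η) :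
    S = {η} := by
  have hK : IsCompact (emb '' S) := hc.image emb_cont
  have hKc : Convex ℝ (emb '' S) := by
    rintro _ ⟨μ₁, h1, rfl⟩ _ ⟨μ₂, h2, rfl⟩ a b ha hb hab
    obtain rfl : b = 1 - a := by linarith
    have e : ENNReal.ofReal a + ENNReal.ofReal (1 - a) = 1 := by
      rw [← ENNReal.ofReal_add ha hb]; simp
    let μ : ProbabilityMeasure (ℕ → A) := ⟨ENNReal.ofReal a • (μ₁ : Measure (ℕ → A)) +
      ENNReal.ofReal (1 - a) • (μ₂ : Measure (ℕ → A)), ⟨by simp [e]⟩⟩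
    have hm : Mix a (μ : Measure (ℕ → A)) μ₁ μ₂ := rfl
    refine ⟨μ, hconv μ₁ h1 μ₂ h2 a ha (by linarith) μ hm, ?_⟩
    funext p
    exact hm.Q ha (by linarith) 0 p.2
  have hE : (emb '' S).extremePoints ℝ ⊆ {emb η} := by
    intro x hx
    rw [mem_extremePoints] at hx
    obtain ⟨⟨μ, hμ, rfl⟩, hx⟩ := hx
    rw [Set.mem_singleton_iff, hext μ ⟨hμ, ?_⟩]
    intro μ₁ h1 μ₂ h2 t h0 h1' hm
    have hm : Mix t (μ : Measure (ℕ → A)) μ₁ μ₂ := hm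
    have := hx _ ⟨μ₁, h1, rfl⟩ _ ⟨μ₂, h2, rfl⟩
      ⟨t, 1 - t, h0, by linarith, by ring, by
        funext p
        exact (hm.Q h0.le h1'.le 0 p.2).symm⟩
    exact emb_inj (this.1.trans this.2.symm)
  have hcl := closure_convexHull_extremePoints hK hKc
  have : emb '' S ⊆ {emb η} := by
    rw [← hcl]
    refine (closure_mono (convexHull_mono hE)).trans ?_
    simp
  refine Set.eq_singleton_iff_nonempty_unique_mem.2 ⟨hne, fun μ hμ => ?_⟩
  exact emb_inj (this ⟨μ, hμ, rfl⟩)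
end KM

section order

lemma ereal_affine (a r : ℝ) (ha : 0 < a) (x y : EReal) :
    (a : EReal) * x + r ≤ a * y + r ↔ x ≤ y := by
  induction x with
  | bot => simp [EReal.coe_mul_bot_of_pos ha]
  | top =>
    induction y with
    | bot => simp [EReal.coe_mul_bot_of_pos ha, EReal.coe_mul_top_of_pos ha]
    | top => simp
    | coe y =>
      simp only [EReal.coe_mul_top_of_pos ha, EReal.top_add_coe, top_le_iff, EReal.coe_ne_top,
        iff_false]
      norm_cast
      exact EReal.coe_ne_top _
  | coe x =>
    induction y with
    | bot =>
      simp only [EReal.coe_mul_bot_of_pos ha, EReal.bot_add, le_bot_iff, EReal.coe_ne_bot, iff_false]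
      norm_cast
      exact EReal.coe_ne_bot _
    | top => simp [EReal.coe_mul_top_of_pos ha]
    | coe y =>
      norm_cast
      constructor
      · intro h
        exact le_of_mul_le_mul_left (by linarith) ha
      · intro h
        have := mul_le_mul_of_nonneg_left h ha.le
        linarith

lemma order_key {M N : Type*} (MX : Set M) (MY : Set N) (p : M → N) (hp : ∀ μ ∈ MX, p μ ∈ MY)
    (V : M → EReal) (T : N → EReal) (r : N → ℝ) (a : ℝ) (ha : 0 < a)
    (hle : ∀ μ ∈ MX, V μ ≤ T (p μ)) (hatt : ∀ ν ∈ MY, ∃ μ ∈ MX, p μ = ν ∧ T ν ≤ V μ) (μ : M)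
    (hμ : μ ∈ MX) :
    (∀ η ∈ MX, (a : EReal) * V η + r (p η) ≤ a * V μ + r (p μ)) ↔
      (∀ ν ∈ MY, (a : EReal) * T ν + r ν ≤ a * T (p μ) + r (p μ)) ∧
      (∀ η ∈ MX, p η = p μ → V η ≤ V μ) := by
  constructor
  · intro h
    have h2 : ∀ η ∈ MX, p η = p μ → V η ≤ V μ := by
      intro η hη e
      have := h η hη
      rw [e, ereal_affine a _ ha] at this
      exact this
    refine ⟨fun ν hν => ?_, h2⟩
    obtain ⟨η, hη, rfl, e⟩ := hatt ν hν
    exact ((ereal_affine a _ ha _ _).2 e).trans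
      ((h η hη).trans ((ereal_affine a _ ha _ _).2 (hle μ hμ)))
  · rintro ⟨h1, h2⟩ η hη
    obtain ⟨μ', hμ', e, h3⟩ := hatt (p μ) (hp μ hμ)
    have h4 : T (p μ) ≤ V μ := h3.trans (h2 _ hμ' e)
    exact ((ereal_affine a _ ha _ _).2 (hle η hη)).trans
      ((h1 _ (hp η hη)).trans ((ereal_affine a _ ha _ _).2 h4))
end order

section final
variable {A : Type} [Fintype A] [TopologicalSpace A] [DiscreteTopology A] [MeasurableSpace A]
  [BorelSpace A]
variable {B : Type} [Fintype B] [TopologicalSpace B] [DiscreteTopology B] [MeasurableSpace B]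
  [BorelSpace B]
variable {X : Set (ℕ → A)} {Y : Set (ℕ → B)} {π : A → B} {a₁ a₂ : ℝ}

lemma EqSet_iff {F : ℕ → (ℕ → A) → ℝ} {μ : ProbabilityMeasure (ℕ → A)} :
    μ ∈ EqSet X F ↔ μ ∈ MInv X ∧ ∀ η ∈ MInv X, eqVal X F η ≤ eqVal X F μ := by
  unfold EqSet
  rw [Set.mem_ofPred_eq]
  refine and_congr_right fun hμ => ⟨fun h η hη => ?_, fun h => ?_⟩
  · rw [h]; exact le_iSup₂ (f := fun η _ => eqVal X F η) η hη
  · exact le_antisymm (le_iSup₂ (f := fun η _ => eqVal X F η) μ hμ) (iSup₂_le h)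

lemma CondEq_iff {F : ℕ → (ℕ → A) → ℝ} {μ : ProbabilityMeasure (ℕ → A)} {ν : Measure (ℕ → B)} :
    μ ∈ CondEqSet X π F ν ↔ μ ∈ MInv X ∧ pushM π μ = ν ∧
      ∀ η ∈ MInv X, pushM π η = ν → eqVal X F η ≤ eqVal X F μ := by
  unfold CondEqSet
  rw [Set.mem_ofPred_eq]
  refine and_congr_right fun hμ => and_congr_right fun hν => ⟨fun h η hη hη' => ?_, fun h => ?_⟩
  · rw [h]
    exact le_iSup₂ (f := fun η (_ : η ∈ {η | η ∈ MInv X ∧ pushM π η = ν}) => eqVal X F η) η ⟨hη, hη'⟩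
  · exact le_antisymm
      (le_iSup₂ (f := fun η (_ : η ∈ {η | η ∈ MInv X ∧ pushM π η = ν}) => eqVal X F η) μ ⟨hμ, hν⟩)
      (iSup₂_le fun η hη => h η hη.1 hη.2)

/-- the globally defined version of `φ` -/
noncomputable def glob (X : Set (ℕ → A)) (φ : List A → ℝ) (I : List A) : ℝ :=
  if Lang X I then φ I else 0

lemma glob_GS (hX : IsSubshift X) {φ : List A → ℝ} (hφ : Submult X φ) :
    ∃ C, GS (glob X φ) C := by
  obtain ⟨h0, h1, c, hc, hsub⟩ := hφ
  have hn : ∀ I, 0 ≤ glob X φ I := by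
    intro I; unfold glob; split_ifs with h
    · exact h0 I h
    · exact le_rfl
  refine ⟨max 0 (Real.log c⁻¹), hn, by simp [glob, Lang_nil hX.1, h1], le_max_left _ _,
    fun I J => ?_⟩
  have hexp : c⁻¹ ≤ Real.exp (max 0 (Real.log c⁻¹)) := by
    calc c⁻¹ = Real.exp (Real.log c⁻¹) := (Real.exp_log (by positivity)).symm
      _ ≤ _ := Real.exp_le_exp.2 (le_max_right _ _)
  by_cases h : Lang X (I ++ J)
  · obtain ⟨hI, hJ⟩ := Lang_sub hX.2.2 I J h
    have h2 := hsub I J h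
    have h3 : c⁻¹ * (φ I * φ J) ≤ Real.exp (max 0 (Real.log c⁻¹)) * (φ I * φ J) :=
      mul_le_mul_of_nonneg_right hexp (mul_nonneg (h0 I hI) (h0 J hJ))
    simp only [glob, h, hI, hJ, if_true]
    linarith
  · have h2 : glob X φ (I ++ J) = 0 := if_neg h
    rw [h2]
    have := hn I
    have := hn J
    positivity

lemma glob_PhiStar (hXm : MeasurableSet X) (φ : List A → ℝ) (μ : ProbabilityMeasure (ℕ → A))
    (hμ : μ ∈ MInv X) : PhiStar (μ : Measure (ℕ → A)) (genPot φ) =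
      PhiStar (μ : Measure (ℕ → A)) (genPot (glob X φ)) := by
  refine PhiStar_congr hXm _ hμ.2 _ _ fun n x hx => ?_
  unfold genPot glob
  rw [wordOf_eq, if_pos (Lang_blk hx n)]

lemma glob_WEq (hXm : MeasurableSet X) (φ : List A → ℝ) :
    WEqSet2 X Y π (genPot φ) a₁ a₂ = WEqSet2 X Y π (genPot (glob X φ)) a₁ a₂ := by
  have h : ∀ μ ∈ MInv X, wVal2 X Y π (genPot φ) a₁ a₂ μ =
      wVal2 X Y π (genPot (glob X φ)) a₁ a₂ μ := by
    intro μ hμ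
    unfold wVal2
    rw [glob_PhiStar hXm φ μ hμ]
  ext μ
  rw [WEq_iff, WEq_iff]
  refine and_congr_right fun hμ => forall₂_congr fun η hη => ?_
  rw [h μ hμ, h η hη]

lemma GS_pow {f : List A → ℝ} {C : ℝ} (hf : GS f C) (s : ℝ) (hs : 0 < s) :
    GS (fun I => f I ^ s) (s * C) := by
  refine ⟨fun I => Real.rpow_nonneg (hf.nonneg I) s, by simp [hf.nil], mul_nonneg hs.le hf.C0,
      fun I J => ?_⟩
  have := Real.rpow_le_rpow (hf.nonneg _) (hf.sub I J) hs.le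
  rwa [Real.mul_rpow (mul_nonneg (Real.exp_pos _).le (hf.nonneg _)) (hf.nonneg _),
    Real.mul_rpow (Real.exp_pos _).le (hf.nonneg _), ← Real.exp_mul, mul_comm C s] at this

lemma ereal_lin (a h r : ℝ) (ha : 0 < a) (e : EReal) :
    (a : EReal) * e + ((a * h + r : ℝ) : EReal) = a * (e + h) + r := by
  induction e with
  | bot => simp [EReal.coe_mul_bot_of_pos ha]
  | top =>
    simp [EReal.coe_mul_top_of_pos ha]
    norm_cast
  | coe x => norm_cast; ring

lemma ereal_lin2 (a b s h : ℝ) (ha : 0 < a) (hb : 0 < b) (hs : 0 < s) (hbs : a * s = b)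
    (e : EReal) :
    (a : EReal) * ((s : EReal) * e + h) + ((0:ℝ) : EReal) = b * (e + h) +
      (((a - b) * h : ℝ) : EReal) := by
  induction e with
  | bot => simp [EReal.coe_mul_bot_of_pos ha, EReal.coe_mul_bot_of_pos hs,
      EReal.coe_mul_bot_of_pos hb]
  | top =>
    simp [EReal.coe_mul_top_of_pos ha, EReal.coe_mul_top_of_pos hs,
      EReal.coe_mul_top_of_pos hb]
    norm_cast
  | coe x => norm_cast; subst hbs; ring

/-- the push-forward as a probability measure -/
noncomputable def pm (π : A → B) (μ : ProbabilityMeasure (ℕ → A)) : ProbabilityMeasure (ℕ → B) :=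
  ⟨pushM π μ, Measure.isProbabilityMeasure_map (measurable_block π).aemeasurable⟩

lemma pm_coe (π : A → B) (μ : ProbabilityMeasure (ℕ → A)) :
    ((pm π μ : ProbabilityMeasure (ℕ → B)) : Measure (ℕ → B)) =
      (μ : Measure (ℕ → A)).map (blockMap π) := rfl

lemma phiTwo_eq (φ : List A → ℝ) (ha₁ : 0 < a₁) (J : List B) :
    phiTwo X π φ a₁ J = psi π (fun I => glob X φ I ^ a₁⁻¹) J ^ a₁ := by
  unfold phiTwo psi glob
  congr 1
  refine Finset.sum_congr rfl fun w _ => ?_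
  have h0 : (0:ℝ) ^ a₁⁻¹ = 0 := Real.zero_rpow (inv_ne_zero ha₁.ne')
  by_cases h1 : Lang X (List.ofFn w) <;> by_cases h2 : List.map π (List.ofFn w) = J <;>
    simp [h1, h2, h0]

lemma char (hX : IsSubshift X) (hYm : MeasurableSet Y) (hπ : blockMap π '' X = Y)
    (ha₁ : 0 < a₁) (ha₂ : 0 ≤ a₂) {φ : List A → ℝ} (hφ : Submult X φ) :
    (∀ μ, μ ∈ WEqSet2 X Y π (genPot φ) a₁ a₂ ↔
      pm π μ ∈ EqSet Y (scPot (a₁ + a₂)⁻¹ (genPot (phiTwo X π φ a₁))) ∧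
      μ ∈ CondEqSet X π (scPot a₁⁻¹ (genPot φ)) (pm π μ : Measure (ℕ → B))) ∧
    (∀ ν ∈ MInv Y, ∃ μ, pm π μ = ν ∧
      μ ∈ CondEqSet X π (scPot a₁⁻¹ (genPot φ)) (ν : Measure (ℕ → B))) := by
  have hXm : MeasurableSet X := hX.2.1.isClosed.measurableSet
  obtain ⟨C, hC⟩ := glob_GS hX hφ
  have hi : 0 < a₁⁻¹ := by positivity
  have has : 0 < a₁ + a₂ := by linarith
  obtain ⟨f, hfd⟩ : ∃ f : List A → ℝ, f = fun I => glob X φ I ^ a₁⁻¹ := ⟨_, rfl⟩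
  have hf : GS f (a₁⁻¹ * C) := by rw [hfd]; exact GS_pow hC _ hi
  have hfg : glob X φ = fun I => f I ^ a₁ := by
    funext I
    rw [hfd]
    simp only
    rw [← Real.rpow_mul (hC.nonneg I), inv_mul_cancel₀ ha₁.ne', Real.rpow_one]
  have hfX : ∀ I, f I ≠ 0 → Lang X I := by
    intro I h
    by_contra hn
    apply h
    rw [hfd]
    simp only [glob, if_neg hn]
    exact Real.zero_rpow hi.ne'
  have hpsi := psi_GS π hf
  let V : ProbabilityMeasure (ℕ → A) → EReal := fun μ =>
    PhiStar (μ : Measure (ℕ → A)) (genPot f) + ((ent X (μ : Measure (ℕ → A)) : ℝ) : EReal)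
  let T : ProbabilityMeasure (ℕ → B) → EReal := fun ν =>
    PhiStar (ν : Measure (ℕ → B)) (genPot (psi π f)) + ((ent Y (ν : Measure (ℕ → B)) : ℝ) : EReal)
  let r : ProbabilityMeasure (ℕ → B) → ℝ := fun ν => a₂ * ent Y (ν : Measure (ℕ → B))
  have hp : ∀ μ ∈ MInv X, pm π μ ∈ MInv Y := by
    intro μ hμ
    rw [MInv_iff] at hμ ⊢
    exact InvOn_push π hπ hYm hμ
  have hle : ∀ μ ∈ MInv X, V μ ≤ T (pm π μ) := by
    intro μ hμ
    rw [MInv_iff] at hμ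
    exact rvp_upper π hπ hXm hYm hf hμ
  have hatt : ∀ ν ∈ MInv Y, ∃ μ ∈ MInv X, pm π μ = ν ∧ T ν ≤ V μ := by
    intro ν hν
    rw [MInv_iff] at hν
    obtain ⟨μ, h1, h2, h3⟩ := rvp_lower π hX hπ hYm hf hfX hν
    exact ⟨⟨μ, h1.1⟩, (MInv_iff (μ := ⟨μ, h1.1⟩)).2 h1, Subtype.ext h2, h3⟩
  have hW : ∀ μ ∈ MInv X, wVal2 X Y π (genPot φ) a₁ a₂ μ =
      (a₁ : EReal) * V μ + (r (pm π μ) : EReal) := by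
    intro μ hμ
    unfold wVal2
    rw [glob_PhiStar hXm φ μ hμ, hfg, PhiStar_pow hf _ hμ.1 a₁ ha₁]
    exact ereal_lin a₁ _ _ ha₁ _
  have hV : ∀ μ ∈ MInv X, eqVal X (scPot a₁⁻¹ (genPot φ)) μ = V μ := by
    intro μ hμ
    unfold eqVal
    rw [PhiStar_congr hXm _ hμ.2 (scPot a₁⁻¹ (genPot φ)) (genPot f)]
    intro n x hx
    unfold scPot genPot
    rw [wordOf_eq, hfd]
    simp only [glob]
    rw [if_pos (Lang_blk hx n)]
  have hE : ∀ ν ∈ MInv Y, ((a₁ + a₂ : ℝ) : EReal) *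
      eqVal Y (scPot (a₁ + a₂)⁻¹ (genPot (phiTwo X π φ a₁))) ν + ((0 : ℝ) : EReal) =
      (a₁ : EReal) * T ν + (r ν : EReal) := by
    intro ν hν
    have e1 : scPot (a₁ + a₂)⁻¹ (genPot (phiTwo X π φ a₁)) =
        genPot (fun J => psi π f J ^ (a₁ * (a₁ + a₂)⁻¹)) := by
      funext n y
      unfold scPot genPot
      rw [phiTwo_eq φ ha₁, ← hfd]
      exact (Real.rpow_mul (hpsi.nonneg _) _ _).symm
    have hs : 0 < a₁ * (a₁ + a₂)⁻¹ := by positivity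
    unfold eqVal
    rw [e1, PhiStar_pow hpsi _ hν.1 _ hs, ereal_lin2 (a₁ + a₂) a₁ _ _ has ha₁ hs (by field_simp),
      show a₁ + a₂ - a₁ = a₂ by ring]
  have hE' : ∀ ν ∈ MInv Y, ∀ ν' ∈ MInv Y,
      (eqVal Y (scPot (a₁ + a₂)⁻¹ (genPot (phiTwo X π φ a₁))) ν ≤
        eqVal Y (scPot (a₁ + a₂)⁻¹ (genPot (phiTwo X π φ a₁))) ν' ↔
      (a₁ : EReal) * T ν + (r ν : EReal) ≤ (a₁ : EReal) * T ν' + (r ν' : EReal)) := by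
    intro ν hν ν' hν'
    rw [← hE ν hν, ← hE ν' hν', ereal_affine _ _ has]
  have hpmeq : ∀ η μ : ProbabilityMeasure (ℕ → A), pushM π η = (pm π μ : Measure (ℕ → B)) ↔
      pm π η = pm π μ := fun η μ => ⟨fun h => Subtype.ext h, fun h => by rw [← h]; rfl⟩
  constructor
  · intro μ
    rw [WEq_iff, EqSet_iff, CondEq_iff]
    by_cases hμ : μ ∈ MInv X
    · have key := order_key (MInv X) (MInv Y) (pm π) hp V T r a₁ ha₁ hle hatt μ hμ
      constructor
      · rintro ⟨-, h⟩
        have h' := key.1 fun η hη => by rw [← hW η hη, ← hW μ hμ]; exact h η hη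
        exact ⟨⟨hp μ hμ, fun ν hν => (hE' ν hν _ (hp μ hμ)).2 (h'.1 ν hν)⟩, hμ, rfl,
          fun η hη e => by rw [hV η hη, hV μ hμ]; exact h'.2 η hη ((hpmeq η μ).1 e)⟩
      · rintro ⟨⟨-, h1⟩, -, -, h2⟩
        refine ⟨hμ, fun η hη => ?_⟩
        rw [hW η hη, hW μ hμ]
        refine key.2 ⟨fun ν hν => (hE' ν hν _ (hp μ hμ)).1 (h1 ν hν), fun η hη e => ?_⟩ η hη
        rw [← hV η hη, ← hV μ hμ]
        exact h2 η hη ((hpmeq η μ).2 e)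
    · exact ⟨fun h => absurd h.1 hμ, fun h => absurd h.2.1 hμ⟩
  · intro ν hν
    obtain ⟨μ, hμ, rfl, h⟩ := hatt ν hν
    refine ⟨μ, rfl, CondEq_iff.2 ⟨hμ, rfl, fun η hη e => ?_⟩⟩
    rw [hV η hη, hV μ hμ]
    refine le_trans ?_ h
    rw [← (hpmeq η μ).1 e]
    exact hle η hη

end final
end WES

/-- Corollary 3.4(ii)(iii) / `cor-1.1`(ii)(iii): the set of `a`-weighted
equilibrium states is non-empty compact convex with ergodic extreme points, and it is a
singleton iff `I((1/(a₁+a₂))Φ^{(2)})` is a singleton `{ν}` and `I_ν((1/a₁)Φ)` contains a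
unique ergodic measure. -/
theorem weighted_eq_states_stmt_8 {A B : Type}
    [Fintype A] [TopologicalSpace A] [DiscreteTopology A] [MeasurableSpace A] [BorelSpace A]
    [Fintype B] [TopologicalSpace B] [DiscreteTopology B] [MeasurableSpace B] [BorelSpace B]
    (X : Set (ℕ → A)) (Y : Set (ℕ → B)) (hX : IsSubshift X) (hY : IsSubshift Y)
    (π : A → B) (hπ : blockMap π '' X = Y)
    (a₁ a₂ : ℝ) (ha₁ : 0 < a₁) (ha₂ : 0 ≤ a₂)
    (φ : List A → ℝ) (hφ : Submult X φ) :
    ((WEqSet2 X Y π (genPot φ) a₁ a₂).Nonempty ∧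
      IsCompact (WEqSet2 X Y π (genPot φ) a₁ a₂) ∧
      ConvexPM (WEqSet2 X Y π (genPot φ) a₁ a₂) ∧
      ∀ μ : ProbabilityMeasure (ℕ → A), IsExtremePM (WEqSet2 X Y π (genPot φ) a₁ a₂) μ →
        Ergodic shiftMap (μ : Measure (ℕ → A))) ∧
    ((∃ μ : ProbabilityMeasure (ℕ → A), WEqSet2 X Y π (genPot φ) a₁ a₂ = {μ}) ↔
      ∃ ν : ProbabilityMeasure (ℕ → B),
        EqSet Y (scPot (a₁ + a₂)⁻¹ (genPot (phiTwo X π φ a₁))) = {ν} ∧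
        ∃! η : ProbabilityMeasure (ℕ → A),
          η ∈ CondEqSet X π (scPot a₁⁻¹ (genPot φ)) (ν : Measure (ℕ → B)) ∧
            Ergodic shiftMap (η : Measure (ℕ → A))) := by
  have hXm : MeasurableSet X := hX.2.1.isClosed.measurableSet
  have hYm : MeasurableSet Y := hY.2.1.isClosed.measurableSet
  have hii : (WEqSet2 X Y π (genPot φ) a₁ a₂).Nonempty ∧
      IsCompact (WEqSet2 X Y π (genPot φ) a₁ a₂) ∧
      ConvexPM (WEqSet2 X Y π (genPot φ) a₁ a₂) ∧
      ∀ μ : ProbabilityMeasure (ℕ → A), IsExtremePM (WEqSet2 X Y π (genPot φ) a₁ a₂) μ →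
        Ergodic shiftMap (μ : Measure (ℕ → A)) := by
    obtain ⟨C, hC⟩ := WES.glob_GS hX hφ
    rw [WES.glob_WEq hXm]
    exact ⟨WES.WEq_nonempty hC hX hYm hπ ha₁.le ha₂, WES.WEq_compact hC hX hYm hπ ha₁.le ha₂,
      WES.WEq_convex hC hX hYm hπ, fun μ hμ => WES.WEq_extreme hC hX hYm hπ μ hμ⟩
  refine ⟨hii, ?_⟩
  obtain ⟨hne, hcomp, hconv, herg⟩ := hii
  obtain ⟨hchar, hsurj⟩ := WES.char hX hYm hπ ha₁ ha₂ hφ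
  constructor
  · rintro ⟨μ, hμ⟩
    have hm : μ ∈ WEqSet2 X Y π (genPot φ) a₁ a₂ := by rw [hμ]; rfl
    have hm2 := (hchar μ).1 hm
    refine ⟨WES.pm π μ, ?_, μ, ⟨hm2.2, herg μ ⟨hm, ?_⟩⟩, ?_⟩
    · refine Set.eq_singleton_iff_unique_mem.2 ⟨hm2.1, fun ν hν => ?_⟩
      obtain ⟨η, rfl, h2⟩ := hsurj ν hν.1
      have : η ∈ WEqSet2 X Y π (genPot φ) a₁ a₂ := (hchar η).2 ⟨hν, h2⟩
      rw [hμ, Set.mem_singleton_iff] at this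
      rw [this]
    · intro μ₁ h1 μ₂ h2 t _ _ _
      rw [hμ, Set.mem_singleton_iff] at h1 h2
      rw [h1, h2]
    · rintro η ⟨hη, -⟩
      have e : WES.pm π η = WES.pm π μ := Subtype.ext hη.2.1
      have : η ∈ WEqSet2 X Y π (genPot φ) a₁ a₂ := (hchar η).2 (by rw [e]; exact ⟨hm2.1, hη⟩)
      rwa [hμ, Set.mem_singleton_iff] at this
  · rintro ⟨ν, hν, η, -, huniq⟩
    refine ⟨η, WES.km_single _ hcomp hconv hne η fun μ hμ => huniq μ ⟨?_, herg μ hμ⟩⟩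
    have h := (hchar μ).1 hμ.1
    have h1 := h.1
    rw [hν, Set.mem_singleton_iff] at h1
    rw [← h1]
    exact h.2
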